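/- arXiv:2201.00847 — 3 statements merged into one kernel-verified Lean document; each statement's English description precedes it below -/
import Mathlib

section
/- Let M be a non-zero finite R-module. Then grade_R(M) = inf{i ≥ 0 : Ext_R^i(M,C) ≠ 0}. In particular, grade_R(M) ≤ G_C-dim_R(M). -/
open CategoryTheory TensorProduct

noncomputable section

universe u

variable (R : Type u) [CommRing R]

/-- The `i`-th Ext module `Ext_R^i(M, N)`. -/
def ExtM (M N : ModuleCat.{u} R) (i : ℕ) : ModuleCat.{u} R :=
  ((Ext R (ModuleCat.{u} R) i).obj (Opposite.op M)).obj N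

/-- The `i`-th Tor module `Tor_i^R(M, N)`. -/
def TorM (M N : ModuleCat.{u} R) (i : ℕ) : ModuleCat.{u} R :=
  ((Tor (ModuleCat.{u} R) i).obj M).obj N

/-- The biduality (evaluation) map `M → Hom_R(Hom_R(M, C), C)`. -/
def bidualityMap (C M : ModuleCat.{u} R) :
    ↥M →ₗ[R] ((↥M →ₗ[R] ↥C) →ₗ[R] ↥C) :=
  (LinearMap.id : (↥M →ₗ[R] ↥C) →ₗ[R] (↥M →ₗ[R] ↥C)).flip

/-- `C` is a semidualizing `R`-module. -/
def IsSemidualizing (C : ModuleCat.{u} R) : Prop :=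
  Module.Finite R ↥C ∧
  Function.Bijective (fun r : R => (r • LinearMap.id : ↥C →ₗ[R] ↥C)) ∧
  ∀ i : ℕ, 0 < i → Subsingleton (ExtM R C C i)

/-- `M` is totally `C`-reflexive. -/
def IsTotallyCReflexive (C M : ModuleCat.{u} R) : Prop :=
  Module.Finite R ↥M ∧
  Function.Bijective (bidualityMap R C M) ∧
  (∀ i : ℕ, 0 < i → Subsingleton (ExtM R M C i)) ∧
  (∀ i : ℕ, 0 < i → Subsingleton (ExtM R (ModuleCat.of R (↥M →ₗ[R] ↥C)) C i))

/-- `G_C`-dimension of `M` is at most `n`: there is an exact sequence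
`0 → X_n → ⋯ → X_0 → M → 0` with each `X_i` totally `C`-reflexive. -/
def gcdimLE (C : ModuleCat.{u} R) : ℕ → ModuleCat.{u} R → Prop
  | 0, M => IsTotallyCReflexive R C M
  | n+1, M => ∃ (X K : ModuleCat.{u} R) (f : ↥K →ₗ[R] ↥X) (g : ↥X →ₗ[R] ↥M),
      Function.Injective f ∧ Function.Surjective g ∧
      LinearMap.ker g = LinearMap.range f ∧
      IsTotallyCReflexive R C X ∧ gcdimLE C n K

/-- The `G_C`-dimension of `M`, as an element of `ℕ∞`. -/
def gcdim (C M : ModuleCat.{u} R) : ℕ∞ :=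
  sInf ((fun n : ℕ => (n : ℕ∞)) '' {n | gcdimLE R C n M})

/-- `grade_R(M) = inf { i | Ext_R^i(M, R) ≠ 0 }`, with `grade 0 = ∞`. -/
def gradeR (M : ModuleCat.{u} R) : ℕ∞ :=
  sInf ((fun i : ℕ => (i : ℕ∞)) ''
    {i | ¬ Subsingleton (ExtM R M (ModuleCat.of R R) i)})

/-- Reduced grade of `M` with respect to `C`. -/
def rgrade (C M : ModuleCat.{u} R) : ℕ∞ :=
  sInf ((fun i : ℕ => (i : ℕ∞)) ''
    {i | 0 < i ∧ ¬ Subsingleton (ExtM R M C i)})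

/-- `M` is reduced `G_C`-perfect. -/
def IsReducedGCPerfect (C M : ModuleCat.{u} R) : Prop :=
  gcdim R C M ≠ ⊤ ∧ rgrade R C M = gcdim R C M

/-- `M` is `G_C`-perfect. -/
def IsGCPerfect (C M : ModuleCat.{u} R) : Prop :=
  gcdim R C M ≠ ⊤ ∧ gradeR R M = gcdim R C M

/-- `π : P → M` is a projective cover: `P` projective, `π` surjective with superfluous kernel. -/
def IsProjectiveCover {P M : ModuleCat.{u} R} (π : ↥P →ₗ[R] ↥M) : Prop :=
  Module.Projective R ↥P ∧ Function.Surjective π ∧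
  ∀ N : Submodule R ↥P, N ⊔ LinearMap.ker π = ⊤ → N = ⊤

/-- `P₁ →d P₀ →π M → 0` is a minimal projective presentation of `M`. -/
def IsMinimalPresentation {P1 P0 M : ModuleCat.{u} R}
    (d : ↥P1 →ₗ[R] ↥P0) (π : ↥P0 →ₗ[R] ↥M) : Prop :=
  Module.Finite R ↥P1 ∧ Module.Finite R ↥P0 ∧
  IsProjectiveCover R π ∧
  LinearMap.range d = LinearMap.ker π ∧
  Module.Projective R ↥P1 ∧
  ∀ N : Submodule R ↥P1, N ⊔ LinearMap.ker d = ⊤ → N = ⊤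

/-- `T` is (a module isomorphic to) the transpose `Tr_C(M)` of `M` with respect to `C`,
computed from a minimal projective presentation of `M`. -/
def IsTransposeC (C M T : ModuleCat.{u} R) : Prop :=
  ∃ (P1 P0 : ModuleCat.{u} R) (d : ↥P1 →ₗ[R] ↥P0) (π : ↥P0 →ₗ[R] ↥M),
    IsMinimalPresentation R d π ∧
    Nonempty (↥T ≃ₗ[R]
      ((↥P1 →ₗ[R] ↥C) ⧸ LinearMap.range (LinearMap.lcomp R ↥C d)))

/-- `T` is the usual Auslander transpose `Tr(M) = Tr_R(M)`. -/
def IsTranspose (M T : ModuleCat.{u} R) : Prop :=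
  IsTransposeC R (ModuleCat.of R R) M T

/-- `S` is (a module isomorphic to) the first syzygy `Ω N`, i.e. the kernel of a
projective cover of `N`. -/
def IsSyzygyOf (N S : ModuleCat.{u} R) : Prop :=
  ∃ (P : ModuleCat.{u} R) (π : ↥P →ₗ[R] ↥N),
    Module.Finite R ↥P ∧ IsProjectiveCover R π ∧
    Nonempty (↥S ≃ₗ[R] LinearMap.ker π)

/-- `S` is (a module isomorphic to) the `n`-th syzygy `Ωⁿ M`. -/
def IsNthSyzygy : ℕ → ModuleCat.{u} R → ModuleCat.{u} R → Prop
  | 0, M, S => Nonempty (↥S ≃ₗ[R] ↥M)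
  | n+1, M, S => ∃ K : ModuleCat.{u} R, IsNthSyzygy n M K ∧ IsSyzygyOf R K S

/-- `L` is (a module isomorphic to) `λ M = Ω Tr M`. -/
def IsLambda (M L : ModuleCat.{u} R) : Prop :=
  ∃ T : ModuleCat.{u} R, IsTranspose R M T ∧ IsSyzygyOf R T L

/-- `M` is horizontally linked, i.e. `M ≅ λλM`. -/
def IsHorizontallyLinked (M : ModuleCat.{u} R) : Prop :=
  ∃ L L2 : ModuleCat.{u} R, IsLambda R M L ∧ IsLambda R L L2 ∧
    Nonempty (↥M ≃ₗ[R] ↥L2)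

/-- `M` is stable: it has no non-zero projective direct summand. -/
def IsStable (M : ModuleCat.{u} R) : Prop :=
  ∀ (P N : ModuleCat.{u} R), Module.Projective R ↥P →
    Nonempty (↥M ≃ₗ[R] (↥P × ↥N)) → Subsingleton ↥P

/-- `N` belongs to the Auslander class `A_C`. -/
def MemAuslanderClass (C N : ModuleCat.{u} R) : Prop :=
  Function.Bijective (TensorProduct.mk R ↥N ↥C) ∧
  (∀ i : ℕ, 0 < i → Subsingleton (TorM R C N i)) ∧
  (∀ i : ℕ, 0 < i → Subsingleton
    (ExtM R C (ModuleCat.of R (↥N ⊗[R] ↥C)) i))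

/-- `R` is semiperfect: every finite `R`-module has a projective cover. -/
def IsSemiperfectRing : Prop :=
  ∀ M : ModuleCat.{u} R, Module.Finite R ↥M →
    ∃ (P : ModuleCat.{u} R) (π : ↥P →ₗ[R] ↥M),
      Module.Finite R ↥P ∧ IsProjectiveCover R π

/-- Depth over a local ring, via Ext from the residue field. -/
def rdepth [IsLocalRing R] (M : ModuleCat.{u} R) : ℕ∞ :=
  sInf ((fun i : ℕ => (i : ℕ∞)) ''
    {i | ¬ Subsingleton
      (ExtM R (ModuleCat.of R (IsLocalRing.ResidueField R)) M i)})

/-- Projective dimension at most `n`. -/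
def pdimLE : ℕ → ModuleCat.{u} R → Prop
  | 0, M => Module.Projective R ↥M
  | n+1, M => ∃ (X K : ModuleCat.{u} R) (f : ↥K →ₗ[R] ↥X) (g : ↥X →ₗ[R] ↥M),
      Function.Injective f ∧ Function.Surjective g ∧
      LinearMap.ker g = LinearMap.range f ∧
      Module.Projective R ↥X ∧ pdimLE n K

/-- Projective dimension, as an element of `ℕ∞`. -/
def pdim (M : ModuleCat.{u} R) : ℕ∞ :=
  sInf ((fun n : ℕ => (n : ℕ∞)) '' {n | pdimLE R n M})

/-- `M` is `C`-`k`-torsionless. -/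
def IsCkTorsionless (C M : ModuleCat.{u} R) (k : ℕ) : Prop :=
  k = 0 ∨ ∀ T : ModuleCat.{u} R, IsTransposeC R C M T →
    ∀ i : ℕ, 1 ≤ i → i ≤ k → Subsingleton (ExtM R T C i)

/-- `M` is a `C`-syzygy: it embeds into `P ⊗_R C` with `P` finite projective. -/
def IsCSyzygy (C M : ModuleCat.{u} R) : Prop :=
  ∃ (P : ModuleCat.{u} R), Module.Finite R ↥P ∧ Module.Projective R ↥P ∧
    ∃ f : ↥M →ₗ[R] (↥P ⊗[R] ↥C), Function.Injective f


/-- There is an exact sequence `0 → N → X_k → ⋯ → X_1 → M → 0` of finite `R`-modules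
with `Ext_R^i(X_j, C) = 0` for all `i > 0` and all `j`. -/
def ExtVanishingChain (C : ModuleCat.{u} R) : ℕ → ModuleCat.{u} R → ModuleCat.{u} R → Prop
  | 0, N, M => Nonempty (↥N ≃ₗ[R] ↥M)
  | k+1, N, M => ∃ (X K : ModuleCat.{u} R) (f : ↥K →ₗ[R] ↥X) (g : ↥X →ₗ[R] ↥M),
      Function.Injective f ∧ Function.Surjective g ∧
      LinearMap.ker g = LinearMap.range f ∧
      Module.Finite R ↥X ∧ (∀ i : ℕ, 0 < i → Subsingleton (ExtM R X C i)) ∧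
      ExtVanishingChain C k N K

/-!
If `Hom(M, C) = 0`, then some `x ∈ ann M` is regular on `C`, hence on `Hom(C, C) ≅ R`. Since
`Ext¹(C, C) = 0`, we get `R/xR ≅ Hom(C, C/xC)`, and replacing `R`, `C` by `R/xR`, `C/xC` shifts
`Ext(M, -)` down by one degree in both arguments at once. If `Hom(M, C) ≠ 0`, then also
`Hom(M, R) ≅ Hom(C, Hom(M, C)) ≠ 0`, because `C` is finite and faithful. To run the induction, the
pair `(R, C)` is generalized to a pair `(A, B)` with `A ≅ Hom(C, B)` and `Ext^i(C, B) = 0` for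
`i > 0`.

A module of finite `G_C`-dimension `n` has `Ext^i(M, C) = 0` for `i > n`. If these groups also
vanished for `i ≤ n`, then `M` would be totally `C`-reflexive with zero dual, so `M = 0`.
-/

section ExtComparison

universe v v' w

variable {R} {𝒜 : Type v'} [Category.{v} 𝒜] [Abelian 𝒜] [Linear R 𝒜]

instance (Y : 𝒜) : Limits.PreservesLimits ((linearYoneda R 𝒜).obj Y) :=
  have : Limits.PreservesLimits ((linearYoneda R 𝒜).obj Y ⋙ forget (ModuleCat R)) :=
    inferInstanceAs (Limits.PreservesLimits (yoneda.obj Y))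
  Limits.preservesLimits_of_reflects_of_preserves _ (forget (ModuleCat R))

variable [EnoughProjectives 𝒜]

lemma subsingleton_ext_zero_obj_iff (X Y : 𝒜) :
    Subsingleton (((Ext R 𝒜 0).obj (Opposite.op X)).obj Y) ↔ Subsingleton (X ⟶ Y) := by
  have := Limits.preservesFiniteColimits_rightOp ((linearYoneda R 𝒜).obj Y)
  have e := (((linearYoneda R 𝒜).obj Y).rightOp.leftDerivedZeroIsoSelf.app X).unop
  exact (e.toLinearEquiv.toEquiv.subsingleton_congr).symm

lemma subsingleton_ext_succ_obj_iff [HasExt.{w} 𝒜] (X Y : 𝒜) (n : ℕ) :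
    Subsingleton (((Ext R 𝒜 (n + 1)).obj (Opposite.op X)).obj Y) ↔
      Subsingleton (Abelian.Ext X Y (n + 1)) := by
  let P := projectiveResolution X
  rw [← ModuleCat.isZero_iff_subsingleton, (P.isoExt (R := R) (n + 1) Y).isZero_iff,
    ← HomologicalComplex.exactAt_iff_isZero_homology,
    HomologicalComplex.exactAt_iff' _ n (n + 1) (n + 2) (by simp) (by simp),
    ShortComplex.moduleCat_exact_iff]
  constructor
  · intro exact_at
    refine subsingleton_of_forall_eq 0 fun x ↦ ?_
    obtain ⟨f, hf, rfl⟩ := P.extMk_surjective x (n + 2) rfl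
    exact (P.extMk_eq_zero_iff f _ rfl hf n rfl).2 (exact_at f hf)
  · intro _ f hf
    exact (P.extMk_eq_zero_iff f (n + 2) rfl hf n rfl).1 (Subsingleton.elim _ _)

lemma subsingleton_ext_obj_iff [HasExt.{w} 𝒜] (X Y : 𝒜) (n : ℕ) :
    Subsingleton (((Ext R 𝒜 n).obj (Opposite.op X)).obj Y) ↔
      Subsingleton (Abelian.Ext X Y n) := by
  cases n with
  | zero =>
    rw [subsingleton_ext_zero_obj_iff, Abelian.Ext.homEquiv₀.subsingleton_congr]
  | succ n => exact subsingleton_ext_succ_obj_iff X Y n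

end ExtComparison

section LongExactSequence

universe v v' w

open Abelian

variable {𝒜 : Type v'} [Category.{v} 𝒜] [Abelian 𝒜] [HasExt.{w} 𝒜]
  {S : ShortComplex 𝒜}

lemma subsingleton_ext_right_X₃ (hS : S.ShortExact) {X : 𝒜} {n : ℕ}
    (h₂ : Subsingleton (Ext X S.X₂ n)) (h₁ : Subsingleton (Ext X S.X₁ (n + 1))) :
    Subsingleton (Ext X S.X₃ n) := by
  refine subsingleton_of_forall_eq 0 fun x ↦ ?_
  obtain ⟨y, rfl⟩ := Ext.covariant_sequence_exact₃ X hS x rfl (Subsingleton.elim _ _)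
  rw [Subsingleton.elim y 0, Ext.zero_comp]

lemma subsingleton_ext_left_X₁ (hS : S.ShortExact) {Y : 𝒜} {n : ℕ}
    (h₂ : Subsingleton (Ext S.X₂ Y n)) (h₃ : Subsingleton (Ext S.X₃ Y (n + 1))) :
    Subsingleton (Ext S.X₁ Y n) := by
  refine subsingleton_of_forall_eq 0 fun x ↦ ?_
  obtain ⟨y, rfl⟩ :=
    Ext.contravariant_sequence_exact₁ hS Y x (add_comm 1 n) (Subsingleton.elim _ _)
  rw [Subsingleton.elim y 0, Ext.comp_zero]

lemma subsingleton_ext_left_X₃ (hS : S.ShortExact) {Y : 𝒜} {n : ℕ}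
    (h₁ : Subsingleton (Ext S.X₁ Y n)) (h₂ : Subsingleton (Ext S.X₂ Y (n + 1))) :
    Subsingleton (Ext S.X₃ Y (n + 1)) := by
  refine subsingleton_of_forall_eq 0 fun x ↦ ?_
  obtain ⟨y, rfl⟩ :=
    Ext.contravariant_sequence_exact₃ hS Y x (Subsingleton.elim _ _) (add_comm 1 n)
  rw [Subsingleton.elim y 0, Ext.comp_zero]

lemma surjective_comp_g_of_subsingleton_ext (hS : S.ShortExact) {X : 𝒜}
    (h : Subsingleton (Ext X S.X₁ 1)) :
    Function.Surjective fun f : X ⟶ S.X₂ ↦ f ≫ S.g := by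
  intro φ
  obtain ⟨y, hy⟩ := Ext.covariant_sequence_exact₃ X hS (Ext.mk₀ φ) (zero_add 1)
    (Subsingleton.elim _ _)
  obtain ⟨ψ, rfl⟩ := (Ext.mk₀_bijective _ _).2 y
  rw [Ext.mk₀_comp_mk₀] at hy
  exact ⟨ψ, (Ext.mk₀_bijective _ _).1 hy⟩

lemma surjective_f_comp_of_subsingleton_ext (hS : S.ShortExact) {Y : 𝒜}
    (h : Subsingleton (Ext S.X₃ Y 1)) :
    Function.Surjective fun f : S.X₂ ⟶ Y ↦ S.f ≫ f := by
  intro φ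
  obtain ⟨y, hy⟩ := Ext.contravariant_sequence_exact₁ hS Y (Ext.mk₀ φ) (add_zero 1)
    (Subsingleton.elim _ _)
  obtain ⟨ψ, rfl⟩ := (Ext.mk₀_bijective _ _).2 y
  rw [Ext.mk₀_comp_mk₀] at hy
  exact ⟨ψ, (Ext.mk₀_bijective _ _).1 hy⟩

end LongExactSequence

section HomFunctor

variable {R} {C A B D : Type*} [AddCommGroup C] [AddCommGroup A] [AddCommGroup B] [AddCommGroup D]
  [Module R C] [Module R A] [Module R B] [Module R D]

lemma exact_compRight_of_exact_of_injective {f : A →ₗ[R] B} {g : B →ₗ[R] D}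
    (hfg : Function.Exact f g) (hf : Function.Injective f) :
    Function.Exact (LinearMap.compRight R f : (C →ₗ[R] A) →ₗ[R] C →ₗ[R] B)
      (LinearMap.compRight R g) := by
  intro φ
  constructor
  · intro hφ
    have mem_range (c : C) : φ c ∈ LinearMap.range f := (hfg (φ c)).1 (LinearMap.congr_fun hφ c)
    refine ⟨(LinearEquiv.ofInjective f hf).symm ∘ₗ φ.codRestrict _ mem_range, ?_⟩
    ext c
    exact congrArg Subtype.val
      ((LinearEquiv.ofInjective f hf).apply_symm_apply ⟨φ c, mem_range c⟩)
  · rintro ⟨ψ, rfl⟩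
    ext c
    exact hfg.apply_apply_eq_zero (ψ c)

lemma isSMulRegular_linearMap {x : R} (hx : IsSMulRegular B x) : IsSMulRegular (C →ₗ[R] B) x :=
  fun _ _ h ↦ LinearMap.ext fun c ↦ hx (LinearMap.congr_fun h c)

lemma subsingleton_linearMap_iff_of_faithfulSMul [IsNoetherianRing R] [Module.Finite R C]
    [FaithfulSMul R C] [Module.Finite R B] :
    Subsingleton (C →ₗ[R] B) ↔ Subsingleton B := by
  refine ⟨fun h ↦ ?_, fun _ ↦ inferInstance⟩
  obtain ⟨r, hr, hreg⟩ := IsSMulRegular.subsingleton_linearMap_iff.1 h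
  rw [Module.annihilator_eq_bot.2 ‹_›, Ideal.mem_bot] at hr
  exact IsSMulRegular.zero_iff_subsingleton.1 (hr ▸ hreg)

lemma subsingleton_linearMap_congr_of_faithfulSMul [IsNoetherianRing R] [Module.Finite R C]
    [FaithfulSMul R C] [Module.Finite R D] [Module.Finite R B] (e : A ≃ₗ[R] C →ₗ[R] B) :
    Subsingleton (D →ₗ[R] A) ↔ Subsingleton (D →ₗ[R] B) := by
  have swap : (D →ₗ[R] A) ≃ₗ[R] C →ₗ[R] D →ₗ[R] B := e.congrRight.trans LinearMap.lflip
  rw [swap.toEquiv.subsingleton_congr, subsingleton_linearMap_iff_of_faithfulSMul]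

end HomFunctor

section ExtModules

variable {R}

lemma subsingleton_extM_iff (M N : ModuleCat.{u} R) (i : ℕ) :
    Subsingleton (ExtM R M N i) ↔ Subsingleton (Abelian.Ext M N i) :=
  subsingleton_ext_obj_iff M N i

lemma subsingleton_ext_zero_iff (M N : ModuleCat.{u} R) :
    Subsingleton (Abelian.Ext M N 0) ↔ Subsingleton (M →ₗ[R] N) :=
  (Abelian.Ext.addEquiv₀.trans ModuleCat.homAddEquiv).toEquiv.subsingleton_congr

/-- The grade `inf {i | Ext_R^i(M, N) ≠ 0}` of `M` with respect to `N`, with value `∞` when every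
`Ext_R^i(M, N)` vanishes. -/
def extGrade (M N : ModuleCat.{u} R) : ℕ∞ :=
  sInf ((fun i : ℕ ↦ (i : ℕ∞)) '' {i | ¬ Subsingleton (ExtM R M N i)})

lemma natCast_le_extGrade_iff {M N : ModuleCat.{u} R} {n : ℕ} :
    (n : ℕ∞) ≤ extGrade M N ↔ ∀ i < n, Subsingleton (Abelian.Ext M N i) := by
  simp only [extGrade, le_sInf_iff, Set.forall_mem_image, Set.mem_ofPred_eq, Nat.cast_le,
    subsingleton_extM_iff]
  exact forall_congr' fun i ↦ by rw [← not_lt, not_imp_not]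

lemma extGrade_le_of_not_subsingleton_ext {M N : ModuleCat.{u} R} {n : ℕ}
    (h : ¬ Subsingleton (Abelian.Ext M N n)) : extGrade M N ≤ n :=
  sInf_le ⟨n, (subsingleton_extM_iff M N n).not.2 h, rfl⟩

end ExtModules

section RegularElement

variable {R} {x : R}

lemma subsingleton_ext_succ_of_mem_annihilator {M B : ModuleCat.{u} R}
    (hxM : x ∈ Module.annihilator R M) (hxB : IsSMulRegular B x) {n : ℕ}
    (h : Subsingleton (Abelian.Ext M (ModuleCat.of R (QuotSMulTop x B)) n)) :
    Subsingleton (Abelian.Ext M B (n + 1)) := by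
  refine subsingleton_of_forall_eq 0 fun y ↦ ?_
  have smul_x_eq_zero :
      y.comp (Abelian.Ext.mk₀ (ModuleCat.smulShortComplex B x).f) (add_zero (n + 1)) = 0 := by
    simpa using! ConcreteCategory.congr_hom
      (Abelian.Ext.postcomp_smul_id_eq_zero_of_mem_annihilator (M := B) hxM (n + 1)) y
  obtain ⟨z, rfl⟩ := Abelian.Ext.covariant_sequence_exact₁ M hxB.smulShortComplex_shortExact y
    smul_x_eq_zero rfl
  rw [show z = 0 from h.elim _ _]
  exact Abelian.Ext.zero_comp M n hxB.smulShortComplex_shortExact.extClass (n + 1) rfl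

lemma forall_lt_succ_subsingleton_ext_iff {M B : ModuleCat.{u} R}
    (hxM : x ∈ Module.annihilator R M) (hxB : IsSMulRegular B x) (n : ℕ) :
    (∀ i < n + 1, Subsingleton (Abelian.Ext M B i)) ↔
      ∀ i < n, Subsingleton (Abelian.Ext M (ModuleCat.of R (QuotSMulTop x B)) i) := by
  constructor
  · intro h i hi
    exact subsingleton_ext_right_X₃ hxB.smulShortComplex_shortExact (h i (by lia))
      (h (i + 1) (by lia))
  · intro h i hi
    cases i with
    | zero =>
      rw [subsingleton_ext_zero_iff]
      exact hxB.linearMap_subsingleton_of_mem_annihilator hxM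
    | succ i => exact subsingleton_ext_succ_of_mem_annihilator hxM hxB (h i (by lia))

lemma nonempty_quotSMulTop_linearMap_equiv {C B : ModuleCat.{u} R} (hxB : IsSMulRegular B x)
    (hCB : Subsingleton (Abelian.Ext C B 1)) :
    Nonempty (QuotSMulTop x (C →ₗ[R] B) ≃ₗ[R] C →ₗ[R] QuotSMulTop x B) := by
  let q : B →ₗ[R] QuotSMulTop x B := Submodule.mkQ _
  have exact_comp : Function.Exact
      (LinearMap.compRight R (LinearMap.lsmul R B x) : (C →ₗ[R] B) →ₗ[R] C →ₗ[R] B)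
      (LinearMap.compRight R q) :=
    exact_compRight_of_exact_of_injective
      ((ShortComplex.ShortExact.moduleCat_exact_iff_function_exact _).1
        hxB.smulShortComplex_shortExact.exact) hxB
  have surjective_comp : Function.Surjective
      (LinearMap.compRight R q : (C →ₗ[R] B) →ₗ[R] C →ₗ[R] QuotSMulTop x B) := by
    intro φ
    obtain ⟨ψ, hψ⟩ := surjective_comp_g_of_subsingleton_ext
      hxB.smulShortComplex_shortExact hCB (ModuleCat.ofHom φ)
    exact ⟨ψ.hom, congrArg ModuleCat.Hom.hom hψ⟩
  exact ⟨(Submodule.quotEquivOfEq _ _ (LinearMap.range_eq_map _).symm).trans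
    (exact_comp.linearEquivOfSurjective surjective_comp)⟩

end RegularElement

section Grade

variable {R} {C M : ModuleCat.{u} R}

lemma IsSemidualizing.faithfulSMul (hC : IsSemidualizing R C) : FaithfulSMul R C :=
  ⟨fun h ↦ hC.2.1.injective (LinearMap.ext h)⟩

variable [IsNoetherianRing R]

lemma forall_lt_subsingleton_ext_iff_of_equiv_linearMap [Module.Finite R C] [FaithfulSMul R C]
    [Module.Finite R M] (n : ℕ) {A B : ModuleCat.{u} R} [Module.Finite R B]
    (e : A ≃ₗ[R] C →ₗ[R] B) (hCB : ∀ i, 0 < i → Subsingleton (Abelian.Ext C B i)) :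
    (∀ i < n, Subsingleton (Abelian.Ext M A i)) ↔
      ∀ i < n, Subsingleton (Abelian.Ext M B i) := by
  induction n generalizing A B with
  | zero => simp only [not_lt_zero, false_imp_iff, implies_true]
  | succ n ih =>
    have hom_iff : Subsingleton (M →ₗ[R] A) ↔ Subsingleton (M →ₗ[R] B) :=
      subsingleton_linearMap_congr_of_faithfulSMul e
    by_cases hMB : Subsingleton (M →ₗ[R] B)
    · obtain ⟨x, hxM, hxB⟩ := IsSMulRegular.subsingleton_linearMap_iff.1 hMB
      have hxA : IsSMulRegular A x := (e.isSMulRegular_congr x).2 (isSMulRegular_linearMap hxB)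
      obtain ⟨eQuot⟩ := nonempty_quotSMulTop_linearMap_equiv hxB (hCB 1 one_pos)
      have : Module.Finite R (ModuleCat.of R (QuotSMulTop x B)) :=
        inferInstanceAs (Module.Finite R (QuotSMulTop x B))
      rw [forall_lt_succ_subsingleton_ext_iff hxM hxA,
        forall_lt_succ_subsingleton_ext_iff hxM hxB]
      exact ih ((QuotSMulTop.congr x e).trans eQuot) fun i hi ↦
        subsingleton_ext_right_X₃ hxB.smulShortComplex_shortExact (hCB i hi)
          (hCB (i + 1) i.succ_pos)
    · have hMA : ¬ Subsingleton (M →ₗ[R] A) := hom_iff.not.2 hMB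
      rw [← subsingleton_ext_zero_iff] at hMA hMB
      exact iff_of_false (fun h ↦ hMA (h 0 n.succ_pos)) fun h ↦ hMB (h 0 n.succ_pos)

lemma extGrade_eq_of_equiv_linearMap [Module.Finite R C] [FaithfulSMul R C] [Module.Finite R M]
    {A B : ModuleCat.{u} R} [Module.Finite R B] (e : A ≃ₗ[R] C →ₗ[R] B)
    (hCB : ∀ i, 0 < i → Subsingleton (Abelian.Ext C B i)) : extGrade M A = extGrade M B :=
  ENat.eq_of_forall_natCast_le_iff fun n ↦ by
    simp only [natCast_le_extGrade_iff, forall_lt_subsingleton_ext_iff_of_equiv_linearMap n e hCB]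

theorem gradeR_eq_extGrade [Module.Finite R M] (hC : IsSemidualizing R C) :
    gradeR R M = extGrade M C := by
  have : Module.Finite R C := hC.1
  have : FaithfulSMul R C := hC.faithfulSMul
  have homothety : R ≃ₗ[R] C →ₗ[R] C := LinearEquiv.ofBijective (LinearMap.lsmul R C) hC.2.1
  exact extGrade_eq_of_equiv_linearMap (A := ModuleCat.of R R) homothety
    fun i hi ↦ (subsingleton_extM_iff C C i).1 (hC.2.2 i hi)

end Grade

section Dual

variable {R} (C : ModuleCat.{u} R) {S : ShortComplex (ModuleCat.{u} R)}

/-- The `C`-dual `Hom_R(X₃, C) → Hom_R(X₂, C) → Hom_R(X₁, C)` of a complex `X₁ → X₂ → X₃`. -/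
def homDual (S : ShortComplex (ModuleCat.{u} R)) : ShortComplex (ModuleCat.{u} R) :=
  ModuleCat.shortComplexOfCompEqZero (LinearMap.lcomp R C S.g.hom) (LinearMap.lcomp R C S.f.hom)
    (LinearMap.ext fun φ ↦ LinearMap.ext fun m ↦ by simp)

lemma exact_lcomp_of_exact [Epi S.g] (hS : S.Exact) :
    Function.Exact (LinearMap.lcomp R C S.g.hom) (LinearMap.lcomp R C S.f.hom) :=
  LinearMap.exact_lcomp_of_exact_of_surjective C
    ((ShortComplex.ShortExact.moduleCat_exact_iff_function_exact S).1 hS)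
    ((ModuleCat.epi_iff_surjective S.g).1 ‹_›)

variable {C}

lemma surjective_lcomp_f (hS : S.ShortExact) (hC : Subsingleton (Abelian.Ext S.X₃ C 1)) :
    Function.Surjective (LinearMap.lcomp R C S.f.hom) := fun φ ↦ by
  obtain ⟨ψ, hψ⟩ := surjective_f_comp_of_subsingleton_ext hS hC (ModuleCat.ofHom φ)
  exact ⟨ψ.hom, congrArg ModuleCat.Hom.hom hψ⟩

lemma homDual_shortExact (hS : S.ShortExact) (hC : Subsingleton (Abelian.Ext S.X₃ C 1)) :
    (homDual C S).ShortExact :=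
  have := hS.epi_g
  ModuleCat.shortComplex_shortExact (homDual C S) (exact_lcomp_of_exact C hS.exact)
    (LinearMap.lcomp_injective_of_surjective _ hS.moduleCat_surjective_g)
    (surjective_lcomp_f hS hC)

lemma bidualityMap_bijective_of_shortExact (hS : S.ShortExact)
    (hS₃ : Subsingleton (Abelian.Ext S.X₃ C 1))
    (hdual : Subsingleton (Abelian.Ext (ModuleCat.of R (S.X₁ →ₗ[R] C)) C 1))
    (h₁ : Function.Surjective (bidualityMap R C S.X₁))
    (h₂ : Function.Bijective (bidualityMap R C S.X₂)) :
    Function.Bijective (bidualityMap R C S.X₃) := by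
  have hS' := homDual_shortExact hS hS₃
  have := hS'.epi_g
  exact LinearMap.bijective_of_surjective_of_bijective_of_right_exact
    S.f.hom S.g.hom
    (LinearMap.lcomp R C (homDual C S).g.hom) (LinearMap.lcomp R C (homDual C S).f.hom)
    (bidualityMap R C S.X₁) (bidualityMap R C S.X₂) (bidualityMap R C S.X₃)
    rfl rfl
    ((ShortComplex.ShortExact.moduleCat_exact_iff_function_exact S).1 hS.exact)
    (exact_lcomp_of_exact C hS'.exact) h₁ h₂ hS.moduleCat_surjective_g
    (surjective_lcomp_f hS' hdual)

end Dual

section GCDimension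

variable {R} {C M : ModuleCat.{u} R}

lemma isTotallyCReflexive_iff : IsTotallyCReflexive R C M ↔
    Module.Finite R M ∧ Function.Bijective (bidualityMap R C M) ∧
      (∀ i, 0 < i → Subsingleton (Abelian.Ext M C i)) ∧
      ∀ i, 0 < i → Subsingleton (Abelian.Ext (ModuleCat.of R (M →ₗ[R] C)) C i) := by
  simp only [IsTotallyCReflexive, subsingleton_extM_iff]

lemma IsTotallyCReflexive.subsingleton_ext (hM : IsTotallyCReflexive R C M) {i : ℕ} (hi : 0 < i) :
    Subsingleton (Abelian.Ext M C i) :=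
  (isTotallyCReflexive_iff.1 hM).2.2.1 i hi

lemma IsTotallyCReflexive.subsingleton_of_linearMap [Subsingleton (M →ₗ[R] C)]
    (hM : IsTotallyCReflexive R C M) : Subsingleton M :=
  hM.2.1.injective.subsingleton

lemma IsTotallyCReflexive.of_shortExact {S : ShortComplex (ModuleCat.{u} R)} (hS : S.ShortExact)
    (h₁ : IsTotallyCReflexive R C S.X₁) (h₂ : IsTotallyCReflexive R C S.X₂)
    (h₃ : Subsingleton (Abelian.Ext S.X₃ C 1)) : IsTotallyCReflexive R C S.X₃ := by
  rw [isTotallyCReflexive_iff] at h₁ h₂ ⊢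
  obtain ⟨-, biduality₁, ext₁, dual₁⟩ := h₁
  obtain ⟨finite₂, biduality₂, ext₂, dual₂⟩ := h₂
  exact ⟨.of_surjective S.g.hom hS.moduleCat_surjective_g,
    bidualityMap_bijective_of_shortExact hS h₃ (dual₁ 1 one_pos) biduality₁.2 biduality₂,
    fun
    | 1, _ => h₃
    | i + 2, _ => subsingleton_ext_left_X₃ hS (ext₁ (i + 1) i.succ_pos) (ext₂ (i + 2) (by lia)),
    fun i hi ↦ subsingleton_ext_left_X₁ (homDual_shortExact hS h₃) (dual₂ i hi)
      (dual₁ (i + 1) i.succ_pos)⟩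

lemma gcdimLE.exists_shortExact {n : ℕ} (hM : gcdimLE R C (n + 1) M) :
    ∃ S : ShortComplex (ModuleCat.{u} R), S.ShortExact ∧ S.X₃ = M ∧
      IsTotallyCReflexive R C S.X₂ ∧ gcdimLE R C n S.X₁ := by
  obtain ⟨X, K, f, g, hf, hg, hfg, hX, hK⟩ := hM
  have exact_fg : Function.Exact f g := LinearMap.exact_iff.2 hfg
  exact ⟨ModuleCat.shortComplexOfCompEqZero f g exact_fg.linearMap_comp_eq_zero,
    ModuleCat.shortComplex_shortExact _ exact_fg hf hg, rfl, hX, hK⟩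

lemma gcdimLE.subsingleton_ext {n : ℕ} (hM : gcdimLE R C n M) {i : ℕ} (hi : n < i) :
    Subsingleton (Abelian.Ext M C i) := by
  induction n generalizing M i with
  | zero => exact IsTotallyCReflexive.subsingleton_ext hM hi
  | succ n ih =>
    obtain ⟨S, hS, rfl, hX, hK⟩ := hM.exists_shortExact
    obtain ⟨i, rfl⟩ := Nat.exists_eq_add_of_lt (n.succ_pos.trans hi)
    rw [zero_add] at hi ⊢
    exact subsingleton_ext_left_X₃ hS (ih hK (by lia)) (hX.subsingleton_ext i.succ_pos)

lemma gcdimLE.isTotallyCReflexive {n : ℕ} (hM : gcdimLE R C n M)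
    (hMC : ∀ i, 0 < i → Subsingleton (Abelian.Ext M C i)) : IsTotallyCReflexive R C M := by
  induction n generalizing M with
  | zero => exact hM
  | succ n ih =>
    obtain ⟨S, hS, rfl, hX, hK⟩ := hM.exists_shortExact
    exact .of_shortExact hS
      (ih hK fun i hi ↦ subsingleton_ext_left_X₁ hS (hX.subsingleton_ext hi) (hMC _ i.succ_pos))
      hX (hMC 1 one_pos)

lemma gcdimLE.exists_not_subsingleton_ext [Nontrivial M] {n : ℕ} (hM : gcdimLE R C n M) :
    ∃ i ≤ n, ¬ Subsingleton (Abelian.Ext M C i) := by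
  by_contra! ext_eq_zero
  have ext_vanishes (i : ℕ) : Subsingleton (Abelian.Ext M C i) :=
    (le_or_gt i n).elim (ext_eq_zero i) hM.subsingleton_ext
  have reflexive : IsTotallyCReflexive R C M := hM.isTotallyCReflexive fun i _ ↦ ext_vanishes i
  have dual_eq_zero : Subsingleton (M →ₗ[R] C) :=
    (subsingleton_ext_zero_iff M C).1 (ext_vanishes 0)
  exact not_subsingleton M reflexive.subsingleton_of_linearMap

theorem extGrade_le_gcdim [Nontrivial M] : extGrade M C ≤ gcdim R C M := by
  refine le_sInf ?_
  rintro _ ⟨n, hM, rfl⟩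
  obtain ⟨i, hin, hi⟩ := gcdimLE.exists_not_subsingleton_ext hM
  exact (extGrade_le_of_not_subsingleton_ext hi).trans (Nat.cast_le.2 hin)

end GCDimension

theorem statement0_general [IsNoetherianRing R]
    (C : ModuleCat.{u} R) (hC : IsSemidualizing R C)
    (M : ModuleCat.{u} R) [Module.Finite R M] [Nontrivial M] :
    gradeR R M =
      sInf ((fun i : ℕ ↦ (i : ℕ∞)) '' {i | ¬ Subsingleton (ExtM R M C i)}) ∧
    gradeR R M ≤ gcdim R C M :=
  ⟨gradeR_eq_extGrade hC, (gradeR_eq_extGrade hC).trans_le extGrade_le_gcdim⟩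

/-- For a non-zero finite module `M`,
`grade_R(M) = inf { i ≥ 0 | Ext_R^i(M, C) ≠ 0 }`; in particular
`grade_R(M) ≤ G_C-dim_R(M)`. -/
theorem statement0 [IsNoetherianRing R] (hsp : IsSemiperfectRing R)
    (C : ModuleCat.{u} R) (hC : IsSemidualizing R C)
    (M : ModuleCat.{u} R) (hMfin : Module.Finite R ↥M) (hM0 : Nontrivial ↥M) :
    gradeR R M =
      sInf ((fun i : ℕ => (i : ℕ∞)) '' {i | ¬ Subsingleton (ExtM R M C i)}) ∧
    gradeR R M ≤ gcdim R C M :=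
  statement0_general R C hC M

end
end

section
/- Let M be a finite R-module. (i) If M is an R-syzygy (i.e. M embeds into a finite projective R-module), then M is a C-syzygy. (ii) M is a C-syzygy if and only if Ext_R^1(Tr_C(M), C) = 0. -/
/-!
Write `X^C = Hom_R(X, C)`, and call `M` `C`-torsionless if the biduality map `M → M^{CC}` is
injective, that is, if the homomorphisms `M → C` separate points.

Since `M^C` is finitely generated, `M` is a `C`-syzygy if and only if it is `C`-torsionless: the
maps in a generating family of `M^C` embed a `C`-torsionless `M` into `C^n`. Finite projective
modules are `C`-torsionless because `R` acts faithfully on `C`, which gives (i).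

For (ii), a presentation `P₁ → P₀ → M → 0` yields an exact sequence `P₀^C → P₁^C → T → 0` with
`T = Tr_C(M)`, and `Ext¹(P₁^C, C) = 0` as `P₁^C` is a direct summand of some `C^n`. Hence
`Ext¹(T, C) = 0` means that every map `P₀^C → C` killing the kernel of `P₀^C → P₁^C` factors through
`P₁^C`. Finite projective modules are `C`-reflexive, so the map is evaluation at some `p ∈ P₀`; it
kills that kernel, which is `M^C`, if and only if the image of `p` in `M` is killed by all of `M^C`,
and it factors if and only if `p` comes from `P₁`, i.e. its image in `M` is zero.
-/

open CategoryTheory TensorProduct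

noncomputable section

universe u

variable (R : Type u) [CommRing R]

section ExtComparison

variable {k : Type*} [Ring k] {A : Type*} [Category* A] [Abelian A] {X Y : A}

lemma subsingleton_derivedExt_succ_iff [Linear k A] [EnoughProjectives A]
    (P : ProjectiveResolution X) (n : ℕ) :
    Subsingleton (((Ext k A (n + 1)).obj (Opposite.op X)).obj Y) ↔
      ∀ f : P.complex.X (n + 1) ⟶ Y, P.complex.d (n + 2) (n + 1) ≫ f = 0 →
        ∃ g : P.complex.X n ⟶ Y, P.complex.d (n + 1) n ≫ g = f := by
  rw [← ModuleCat.isZero_iff_subsingleton, (P.isoExt (n + 1) Y).isZero_iff,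
    ← HomologicalComplex.exactAt_iff_isZero_homology,
    HomologicalComplex.exactAt_iff' _ n (n + 1) (n + 2) (by simp) (by simp),
    ShortComplex.moduleCat_exact_iff]
  rfl

lemma subsingleton_abelianExt_succ_iff [HasExt A] (P : ProjectiveResolution X) (n : ℕ) :
    Subsingleton (Abelian.Ext X Y (n + 1)) ↔
      ∀ f : P.complex.X (n + 1) ⟶ Y, P.complex.d (n + 2) (n + 1) ≫ f = 0 →
        ∃ g : P.complex.X n ⟶ Y, P.complex.d (n + 1) n ≫ g = f := by
  rw [subsingleton_iff_forall_eq 0]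
  constructor
  · intro h f hf
    exact (P.extMk_eq_zero_iff f (n + 2) rfl hf n rfl).1 (h _)
  · intro h x
    obtain ⟨f, hf, rfl⟩ := P.extMk_surjective x (n + 2) rfl
    exact (P.extMk_eq_zero_iff f (n + 2) rfl hf n rfl).2 (h f hf)

variable (k X Y) in
lemma subsingleton_derivedExt_succ_iff_abelianExt [Linear k A] [EnoughProjectives A] [HasExt A]
    (n : ℕ) :
    Subsingleton (((Ext k A (n + 1)).obj (Opposite.op X)).obj Y) ↔
      Subsingleton (Abelian.Ext X Y (n + 1)) :=
  let P := projectiveResolution X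
  (subsingleton_derivedExt_succ_iff P n).trans (subsingleton_abelianExt_succ_iff P n).symm

end ExtComparison

section AbelianExt

variable {A : Type*} [Category* A] [Abelian A] [HasExt A]

lemma subsingleton_abelianExt_of_sum_comp_eq_id {ι : Type*} [Fintype ι] {X Y Z : A}
    (a : ι → (X ⟶ Y)) (b : ι → (Y ⟶ X)) (hab : ∑ i, a i ≫ b i = 𝟙 X) (n : ℕ)
    [Subsingleton (Abelian.Ext Y Z n)] : Subsingleton (Abelian.Ext X Z n) := by
  refine subsingleton_of_forall_eq 0 fun x => ?_
  rw [← Abelian.Ext.mk₀_id_comp x, ← hab, Abelian.Ext.mk₀_sum, Abelian.Ext.sum_comp]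
  refine Finset.sum_eq_zero fun i _ => ?_
  rw [← Abelian.Ext.mk₀_comp_mk₀_assoc,
    Subsingleton.elim ((Abelian.Ext.mk₀ (b i)).comp x (zero_add n)) 0, Abelian.Ext.comp_zero]

lemma subsingleton_abelianExt_one_iff_of_shortExact {S : ShortComplex A} (hS : S.ShortExact)
    (Y : A) [Subsingleton (Abelian.Ext S.X₂ Y 1)] :
    Subsingleton (Abelian.Ext S.X₃ Y 1) ↔ ∀ f : S.X₁ ⟶ Y, ∃ g : S.X₂ ⟶ Y, S.f ≫ g = f := by
  constructor
  · intro _ f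
    obtain ⟨x, hx⟩ := Abelian.Ext.contravariant_sequence_exact₁ hS Y (Abelian.Ext.mk₀ f)
      (add_zero 1) (Subsingleton.elim _ _)
    obtain ⟨g, rfl⟩ := (Abelian.Ext.mk₀_bijective S.X₂ Y).2 x
    rw [Abelian.Ext.mk₀_comp_mk₀] at hx
    exact ⟨g, (Abelian.Ext.mk₀_bijective S.X₁ Y).1 hx⟩
  · intro h
    refine subsingleton_of_forall_eq 0 fun x => ?_
    obtain ⟨y, rfl⟩ := Abelian.Ext.contravariant_sequence_exact₃ hS Y x
      (Subsingleton.elim _ _) (add_zero 1)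
    obtain ⟨f, rfl⟩ := (Abelian.Ext.mk₀_bijective S.X₁ Y).2 y
    obtain ⟨g, rfl⟩ := h f
    rw [← Abelian.Ext.mk₀_comp_mk₀, hS.extClass_comp_assoc]

end AbelianExt

section Modules

variable {R}

lemma subsingleton_ExtM_one_iff_forall_exists_comp_eq {A X T C : ModuleCat.{u} R}
    [Subsingleton (ExtM R X C 1)] (a : A →ₗ[R] X) (q : X →ₗ[R] T)
    (hq : Function.Surjective q) (haq : Function.Exact a q) :
    Subsingleton (ExtM R T C 1) ↔
      ∀ ψ : A →ₗ[R] C, LinearMap.ker a ≤ LinearMap.ker ψ → ∃ h : X →ₗ[R] C, h ∘ₗ a = ψ := by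
  let i : (A ⧸ LinearMap.ker a) →ₗ[R] X := (LinearMap.ker a).liftQ a le_rfl
  have hiq : Function.Exact i q := by
    rw [LinearMap.exact_iff] at haq ⊢
    exact haq.trans (Submodule.range_liftQ _ a le_rfl).symm
  let S : ShortComplex (ModuleCat.{u} R) :=
    ModuleCat.shortComplexOfCompEqZero i q hiq.linearMap_comp_eq_zero
  have hS : S.ShortExact := ModuleCat.shortComplex_shortExact S hiq
    (LinearMap.ker_eq_bot.1 (Submodule.ker_liftQ_eq_bot _ a le_rfl le_rfl)) hq
  have : Subsingleton (Abelian.Ext S.X₂ C 1) :=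
    (subsingleton_derivedExt_succ_iff_abelianExt R X C 0).1 ‹_›
  refine (subsingleton_derivedExt_succ_iff_abelianExt R T C 0).trans
    ((subsingleton_abelianExt_one_iff_of_shortExact hS C).trans ⟨fun H ψ hψ => ?_, fun H f => ?_⟩)
  · obtain ⟨h, hh⟩ := H (ModuleCat.ofHom ((LinearMap.ker a).liftQ ψ hψ))
    refine ⟨h.hom, LinearMap.ext fun x => ?_⟩
    exact LinearMap.congr_fun (congrArg ModuleCat.Hom.hom hh) (Submodule.Quotient.mk x)
  · obtain ⟨h, hh⟩ := H (f.hom ∘ₗ (LinearMap.ker a).mkQ) fun x hx => by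
      rw [LinearMap.mem_ker, LinearMap.comp_apply, Submodule.mkQ_apply,
        (Submodule.Quotient.mk_eq_zero _).2 hx, map_zero]
    refine ⟨ModuleCat.ofHom h, ModuleCat.hom_ext (Submodule.linearMap_qext _ ?_)⟩
    exact hh

variable (R) in
lemma exists_finite_dual_basis (P : Type*) [AddCommGroup P] [Module R P] [Module.Finite R P]
    [Module.Projective R P] :
    ∃ (n : ℕ) (b : Fin n → P) (ξ : Fin n → P →ₗ[R] R), ∀ p, ∑ i, ξ i p • b i = p := by
  obtain ⟨n, s, g, -, -, hsg⟩ := Module.Finite.exists_comp_eq_id_of_projective R P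
  refine ⟨n, fun i => s (Pi.single i 1), fun i => LinearMap.proj i ∘ₗ g, fun p => ?_⟩
  calc ∑ i, g p i • s (Pi.single i 1)
      = s (g p) := by simp [← map_smul, ← map_sum, ← Pi.single_smul, LinearMap.sum_single_apply]
    _ = p := LinearMap.congr_fun hsg p

variable {C M N P : ModuleCat.{u} R}

lemma bidualityMap_injective_iff :
    Function.Injective (bidualityMap R C M) ↔ ∀ m, (∀ φ : M →ₗ[R] C, φ m = 0) → m = 0 := by
  rw [injective_iff_map_eq_zero]
  exact forall_congr' fun m => imp_congr_left LinearMap.ext_iff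

lemma bidualityMap_injective_of_injective (f : M →ₗ[R] N) (hf : Function.Injective f)
    (hN : Function.Injective (bidualityMap R C N)) : Function.Injective (bidualityMap R C M) := by
  rw [bidualityMap_injective_iff] at hN ⊢
  exact fun m hm => (map_eq_zero_iff f hf).1 (hN _ fun φ => hm (φ ∘ₗ f))

lemma bidualityMap_injective_of_projective [FaithfulSMul R C] [Module.Finite R P]
    [Module.Projective R P] : Function.Injective (bidualityMap R C P) := by
  obtain ⟨n, b, ξ, hb⟩ := exists_finite_dual_basis R P
  refine bidualityMap_injective_iff.2 fun p hp => ?_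
  have hξ : ∀ i, ξ i p = 0 := fun i =>
    FaithfulSMul.eq_of_smul_eq_smul (α := C) fun c => by
      rw [zero_smul]
      exact hp ((ξ i).smulRight c)
  rw [← hb p]
  simp only [hξ, zero_smul, Finset.sum_const_zero]

lemma sum_smulRight_apply_eq {n : ℕ} {b : Fin n → P} {ξ : Fin n → P →ₗ[R] R}
    (hb : ∀ p, ∑ i, ξ i p • b i = p) (φ : P →ₗ[R] C) :
    ∑ i, (ξ i).smulRight (φ (b i)) = φ := by
  ext p
  conv_rhs => rw [← hb p]
  simp

lemma bidualityMap_surjective_of_projective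
    (hC : Function.Surjective fun r : R => (r • LinearMap.id : C →ₗ[R] C)) [Module.Finite R P]
    [Module.Projective R P] : Function.Surjective (bidualityMap R C P) := by
  intro ψ
  obtain ⟨n, b, ξ, hb⟩ := exists_finite_dual_basis R P
  choose r hr using fun i => hC (ψ ∘ₗ LinearMap.smulRightₗ (ξ i))
  refine ⟨∑ i, r i • b i, LinearMap.ext fun φ => ?_⟩
  calc φ (∑ i, r i • b i)
      = ∑ i, ψ ((ξ i).smulRight (φ (b i))) := by
        simp only [map_sum, map_smul]
        exact Finset.sum_congr rfl fun i _ => LinearMap.congr_fun (hr i) (φ (b i))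
    _ = ψ φ := by rw [← map_sum, sum_smulRight_apply_eq hb]

lemma subsingleton_ExtM_dual_of_projective (n : ℕ) [Subsingleton (ExtM R C N (n + 1))]
    [Module.Finite R P] [Module.Projective R P] :
    Subsingleton (ExtM R (ModuleCat.of R (P →ₗ[R] C)) N (n + 1)) := by
  obtain ⟨m, b, ξ, hb⟩ := exists_finite_dual_basis R P
  have := (subsingleton_derivedExt_succ_iff_abelianExt R C N n).1 ‹_›
  refine (subsingleton_derivedExt_succ_iff_abelianExt R _ N n).2
    (subsingleton_abelianExt_of_sum_comp_eq_id
      (fun i => ModuleCat.ofHom (LinearMap.applyₗ (b i)))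
      (fun i => ModuleCat.ofHom (LinearMap.smulRightₗ (ξ i))) ?_ (n + 1))
  refine ModuleCat.hom_ext (LinearMap.ext fun φ => ?_)
  simpa using sum_smulRight_apply_eq hb φ

lemma bidualityMap_injective_tensor_of_projective [Module.Finite R P] [Module.Projective R P] :
    Function.Injective (bidualityMap R C (ModuleCat.of R (P ⊗[R] C))) := by
  obtain ⟨n, b, ξ, hb⟩ := exists_finite_dual_basis R P
  let coord (i : Fin n) : P ⊗[R] C →ₗ[R] C := TensorProduct.lid R C ∘ₗ (ξ i).rTensor C
  have hcoord : ∑ i, TensorProduct.mk R P C (b i) ∘ₗ coord i = LinearMap.id :=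
    TensorProduct.ext' fun p c => by
      calc (∑ i, TensorProduct.mk R P C (b i) ∘ₗ coord i) (p ⊗ₜ[R] c)
          = (∑ i, ξ i p • b i) ⊗ₜ[R] c := by
            simp [coord, TensorProduct.sum_tmul, ← TensorProduct.smul_tmul']
        _ = p ⊗ₜ[R] c := by rw [hb]
  refine bidualityMap_injective_iff.2 fun z hz => ?_
  calc z = ∑ i, b i ⊗ₜ[R] coord i z := by
        simpa using (LinearMap.congr_fun hcoord z).symm
    _ = 0 := Finset.sum_eq_zero fun i _ => by rw [hz (coord i), TensorProduct.tmul_zero]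

lemma exists_injective_pi_of_bidualityMap_injective [Module.Finite R (M →ₗ[R] C)]
    (hM : Function.Injective (bidualityMap R C M)) :
    ∃ (n : ℕ) (f : M →ₗ[R] Fin n → C), Function.Injective f := by
  obtain ⟨n, φ, hφ⟩ := Module.Finite.exists_fin (R := R) (M := M →ₗ[R] C)
  refine ⟨n, LinearMap.pi φ, (injective_iff_map_eq_zero _).2 fun m hm => hM ?_⟩
  rw [map_zero]
  exact LinearMap.ext_on_range hφ fun i => congrFun hm i

lemma isCSyzygy_iff_bidualityMap_injective [Module.Finite R (M →ₗ[R] C)] :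
    IsCSyzygy R C M ↔ Function.Injective (bidualityMap R C M) := by
  constructor
  · rintro ⟨P, _, _, f, hf⟩
    exact bidualityMap_injective_of_injective (N := ModuleCat.of R (P ⊗[R] C)) f hf
      bidualityMap_injective_tensor_of_projective
  · intro hM
    obtain ⟨n, f, hf⟩ := exists_injective_pi_of_bidualityMap_injective hM
    let e : (Fin n → C) ≃ₗ[R] (Fin n → R) ⊗[R] C :=
      (TensorProduct.piScalarRight R R C (Fin n)).symm ≪≫ₗ TensorProduct.comm R C (Fin n → R)
    exact ⟨ModuleCat.of R (Fin n → R), inferInstanceAs (Module.Finite R (Fin n → R)),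
      inferInstanceAs (Module.Projective R (Fin n → R)), e ∘ₗ f, e.injective.comp hf⟩

lemma exists_isMinimalPresentation [IsNoetherianRing R] (hR : IsSemiperfectRing R)
    (M : ModuleCat.{u} R) [Module.Finite R M] :
    ∃ (P1 P0 : ModuleCat.{u} R) (d : P1 →ₗ[R] P0) (π : P0 →ₗ[R] M),
      IsMinimalPresentation R d π := by
  obtain ⟨P0, π, hP0, hπ⟩ := hR M ‹_›
  obtain ⟨P1, ρ, hP1, hP1', hρ, hρ'⟩ := hR (ModuleCat.of R (LinearMap.ker π))
    (inferInstanceAs (Module.Finite R (LinearMap.ker π)))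
  refine ⟨P1, P0, (LinearMap.ker π).subtype ∘ₗ ρ, π, hP1, hP0, hπ, ?_, hP1', ?_⟩
  · rw [LinearMap.range_comp_of_range_eq_top _ (LinearMap.range_eq_top.2 hρ),
      Submodule.range_subtype]
  · rwa [LinearMap.ker_comp_of_ker_eq_bot _ (Submodule.ker_subtype _)]

lemma subsingleton_ExtM_one_iff_bidualityMap_injective {P1 P0 T : ModuleCat.{u} R}
    [Module.Finite R P0] [Module.Projective R P0] [Module.Finite R P1] [Module.Projective R P1]
    (hC : Function.Bijective fun r : R => (r • LinearMap.id : C →ₗ[R] C))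
    [Subsingleton (ExtM R C C 1)] {d : P1 →ₗ[R] P0} {π : P0 →ₗ[R] M}
    (hπ : Function.Surjective π) (hdπ : Function.Exact d π)
    {q : (P1 →ₗ[R] C) →ₗ[R] T} (hq : Function.Surjective q)
    (hdq : Function.Exact (LinearMap.lcomp R C d) q) :
    Subsingleton (ExtM R T C 1) ↔ Function.Injective (bidualityMap R C M) := by
  have : FaithfulSMul R C := ⟨fun h => hC.1 (LinearMap.ext h)⟩
  have := subsingleton_ExtM_dual_of_projective (C := C) (N := C) (P := P1) 0
  rw [subsingleton_ExtM_one_iff_forall_exists_comp_eq (A := ModuleCat.of R (P0 →ₗ[R] C))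
      (X := ModuleCat.of R (P1 →ₗ[R] C)) _ q hq hdq,
    (bidualityMap_surjective_of_projective hC.2).forall, bidualityMap_injective_iff, hπ.forall]
  refine forall_congr' fun p => imp_congr ?_ ?_
  · rw [(LinearMap.exact_lcomp_of_exact_of_surjective C hdπ hπ).linearMap_ker_eq]
    exact Set.range_subset_iff
  · calc (∃ h, h ∘ₗ LinearMap.lcomp R C d = bidualityMap R C P0 p)
        ↔ ∃ x, bidualityMap R C P0 (d x) = bidualityMap R C P0 p :=
          (bidualityMap_surjective_of_projective hC.2).exists
      _ ↔ ∃ x, d x = p := by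
        simp only [bidualityMap_injective_of_projective.eq_iff]
      _ ↔ π p = 0 := (hdπ p).symm

lemma subsingleton_ExtM_one_iff_of_isTransposeC {T : ModuleCat.{u} R}
    (hC : Function.Bijective fun r : R => (r • LinearMap.id : C →ₗ[R] C))
    [Subsingleton (ExtM R C C 1)] (hT : IsTransposeC R C M T) :
    Subsingleton (ExtM R T C 1) ↔ Function.Injective (bidualityMap R C M) := by
  obtain ⟨P1, P0, d, π, ⟨_, _, ⟨_, hπ, -⟩, hdπ, _, -⟩, ⟨e⟩⟩ := hT
  let q : (P1 →ₗ[R] C) →ₗ[R] T := e.symm ∘ₗ (LinearMap.range (LinearMap.lcomp R C d)).mkQ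
  have hdq : Function.Exact (LinearMap.lcomp R C d) q := by
    rw [LinearMap.exact_iff, LinearEquiv.ker_comp, Submodule.ker_mkQ]
  exact subsingleton_ExtM_one_iff_bidualityMap_injective hC hπ (LinearMap.exact_iff.2 hdπ.symm)
    (e.symm.surjective.comp (Submodule.mkQ_surjective _)) hdq

lemma exists_isTransposeC [IsNoetherianRing R] (hR : IsSemiperfectRing R) (C M : ModuleCat.{u} R)
    [Module.Finite R M] : ∃ T : ModuleCat.{u} R, IsTransposeC R C M T := by
  obtain ⟨P1, P0, d, π, h⟩ := exists_isMinimalPresentation hR M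
  exact ⟨ModuleCat.of R ((P1 →ₗ[R] C) ⧸ LinearMap.range (LinearMap.lcomp R C d)),
    P1, P0, d, π, h, ⟨LinearEquiv.refl R _⟩⟩

end Modules

theorem statement1_general [IsNoetherianRing R] (hsp : IsSemiperfectRing R)
    (C : ModuleCat.{u} R) [Module.Finite R C]
    (hC : Function.Bijective fun r : R => (r • LinearMap.id : C →ₗ[R] C))
    (hCext : Subsingleton (ExtM R C C 1)) (M : ModuleCat.{u} R) [Module.Finite R M] :
    ((∃ (P : ModuleCat.{u} R), Module.Finite R P ∧ Module.Projective R P ∧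
        ∃ f : M →ₗ[R] P, Function.Injective f) → IsCSyzygy R C M) ∧
    (IsCSyzygy R C M ↔
      ∀ T : ModuleCat.{u} R, IsTransposeC R C M T → Subsingleton (ExtM R T C 1)) := by
  rw [isCSyzygy_iff_bidualityMap_injective]
  refine ⟨?_, fun hM T hT => (subsingleton_ExtM_one_iff_of_isTransposeC hC hT).2 hM, fun hT => ?_⟩
  · rintro ⟨P, _, _, f, hf⟩
    have : FaithfulSMul R C := ⟨fun h => hC.1 (LinearMap.ext h)⟩
    exact bidualityMap_injective_of_injective f hf bidualityMap_injective_of_projective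
  · obtain ⟨T, hT'⟩ := exists_isTransposeC hsp C M
    exact (subsingleton_ExtM_one_iff_of_isTransposeC hC hT').1 (hT T hT')

/-- (i) if `M` embeds into a finite projective module then `M` is a
`C`-syzygy; (ii) `M` is a `C`-syzygy iff `Ext_R^1(Tr_C(M), C) = 0`. -/
theorem statement1 [IsNoetherianRing R] (hsp : IsSemiperfectRing R)
    (C : ModuleCat.{u} R) (hC : IsSemidualizing R C)
    (M : ModuleCat.{u} R) (hMfin : Module.Finite R ↥M) :
    ((∃ (P : ModuleCat.{u} R), Module.Finite R ↥P ∧ Module.Projective R ↥P ∧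
        ∃ f : ↥M →ₗ[R] ↥P, Function.Injective f) → IsCSyzygy R C M) ∧
    (IsCSyzygy R C M ↔
      ∀ T : ModuleCat.{u} R, IsTransposeC R C M T →
        Subsingleton (ExtM R T C 1)) := by
  obtain ⟨_, hhom, hext⟩ := hC
  exact statement1_general R hsp C hhom (hext 1 one_pos) M

end
end

section
/- Let M be a reduced G_C-perfect R-module of G_C-dimension n. Then G_C-dim_R(M) + G_C-dim_R(Tr_C(M)) = G_C-dim_R(Ext_R^n(M,C)) + 1 (as an equality in ℕ ∪ {∞}; in particular Tr_C(M) has finite G_C-dimension if and only if Ext_R^n(M,C) does). -/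
open CategoryTheory TensorProduct

noncomputable section

universe u

variable (R : Type u) [CommRing R]

/-!
Let `P₁ → P₀ → M → 0` be a presentation, `K` the first and `K₂` the second syzygy of `M`.

* If `n = 1`, then `K` and `K₂` are totally `C`-reflexive, and
  `0 → Ext¹(M, C) → Tr_C M → K₂^C → 0` is exact. A submodule with totally `C`-reflexive quotient has
  the same `G_C`-dimension as the ambient module, so `Ext¹(M, C)` and `Tr_C M` have the same one.
* If `n > 1`, then `Ext¹(M, C) = 0` and `0 → Tr_C M → P₂^C → Tr_C K → 0` is exact, where
  `P₂ → P₁ → K → 0` presents `K`. As `Extⁿ(M, C) ≅ Extⁿ⁻¹(K, C)`, induction shows that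
  `G_C-dim (Tr_C M) ≤ j` if and only if `G_C-dim Extⁿ(M, C) ≤ j + (n - 1)`.

The formula follows unless `G_C-dim Extⁿ(M, C) < n - 1`. In that case `Tr_C M` would be totally
`C`-reflexive; then so would be `K^C`, hence `K`, and every `Extⁱ(M, C)` with `i > 0` would vanish,
contradicting `Extⁿ(M, C) ≠ 0`.
-/

section TransposeFormula

variable {R}

section ExtComparison

/-- The degree `i + 1` spot `Hom(Q_i, C) → Hom(Q_{i+1}, C) → Hom(Q_{i+2}, C)` of the complex
`Hom(Q, C)`, for a projective resolution `Q`. -/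
abbrev homSpot {M : ModuleCat.{u} R} (Q : ProjectiveResolution M) (C : ModuleCat.{u} R) (i : ℕ) :
    ShortComplex (ModuleCat.{u} R) :=
  (Q.complex.linearYonedaObj R C).sc' i (i + 1) (i + 2)

/-- The map sending a cocycle of `Hom(Q, C)` to its class in `Ext`. -/
def cocycleClass {M : ModuleCat.{u} R} (Q : ProjectiveResolution M) (C : ModuleCat.{u} R) (i : ℕ) :
    LinearMap.ker (homSpot Q C i).g.hom →ₗ[R] Abelian.Ext.{u} M C (i + 1) where
  toFun f := Q.extMk f.1 (i + 2) rfl f.2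
  map_add' f g := (Q.add_extMk f.1 g.1 (i + 2) rfl f.2 g.2).symm
  map_smul' r f := by
    rw [RingHom.id_apply, Abelian.Ext.smul_eq_comp_mk₀,
      Q.extMk_comp_mk₀ f.1 (i + 2) rfl f.2 (r • 𝟙 C)]
    congr 1

theorem cocycleClass_surjective {M : ModuleCat.{u} R} (Q : ProjectiveResolution M)
    (C : ModuleCat.{u} R) (i : ℕ) : Function.Surjective (cocycleClass Q C i) := fun x ↦
  let ⟨f, hf, hx⟩ := Q.extMk_surjective x (i + 2) rfl
  ⟨⟨f, hf⟩, hx⟩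

theorem ker_cocycleClass {M : ModuleCat.{u} R} (Q : ProjectiveResolution M)
    (C : ModuleCat.{u} R) (i : ℕ) :
    LinearMap.ker (cocycleClass Q C i) = LinearMap.range (homSpot Q C i).moduleCatToCycles := by
  ext f
  rw [LinearMap.mem_ker]
  refine (Q.extMk_eq_zero_iff f.1 (i + 2) rfl f.2 i rfl).trans ?_
  exact exists_congr fun g ↦ ⟨fun hg ↦ Subtype.ext hg, congrArg Subtype.val⟩

/-- `ExtM`, a derived functor, agrees in positive degrees with the `Ext` of the derived category,
whose long exact sequences are available. -/
def extMEquiv (M C : ModuleCat.{u} R) (i : ℕ) :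
    ExtM R M C (i + 1) ≃ₗ[R] Abelian.Ext.{u} M C (i + 1) :=
  let Q := ProjectiveResolution.of M
  (Q.isoExt (i + 1) C ≪≫
    ShortComplex.homologyMapIso
      ((Q.complex.linearYonedaObj R C).isoSc' i (i + 1) (i + 2) (by simp) (by simp)) ≪≫
    (homSpot Q C i).moduleCatHomologyIso).toLinearEquiv ≪≫ₗ
  Submodule.quotEquivOfEq _ _ (ker_cocycleClass Q C i).symm ≪≫ₗ
  (cocycleClass Q C i).quotKerEquivOfSurjective (cocycleClass_surjective Q C i)

end ExtComparison

section ShortExact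

variable {A B D P : Type*} [AddCommGroup A] [Module R A] [AddCommGroup B] [Module R B]
  [AddCommGroup D] [Module R D] [AddCommGroup P] [Module R P]

/-- `0 → A → B → D → 0` is a short exact sequence of modules. -/
structure IsShortExact (f : A →ₗ[R] B) (g : B →ₗ[R] D) : Prop where
  injective : Function.Injective f
  exact : Function.Exact f g
  surjective : Function.Surjective g

theorem isShortExact_ker_subtype {g : B →ₗ[R] D} (hg : Function.Surjective g) :
    IsShortExact (LinearMap.ker g).subtype g :=
  ⟨Subtype.val_injective, LinearMap.exact_subtype_ker_map g, hg⟩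

theorem isShortExact_range_subtype {f : A →ₗ[R] B} {g : B →ₗ[R] D} (hfg : Function.Exact f g)
    (hg : Function.Surjective g) : IsShortExact (LinearMap.range f).subtype g :=
  ⟨Subtype.val_injective, by
    rw [LinearMap.exact_iff, Submodule.range_subtype, hfg.linearMap_ker_eq], hg⟩

theorem IsShortExact.bijective_mid {A' B' D' : Type*} [AddCommGroup A'] [Module R A']
    [AddCommGroup B'] [Module R B'] [AddCommGroup D'] [Module R D'] {f : A →ₗ[R] B}
    {g : B →ₗ[R] D} {f' : A' →ₗ[R] B'} {g' : B' →ₗ[R] D'} (h : IsShortExact f g)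
    (h' : IsShortExact f' g') {a : A →ₗ[R] A'} {b : B →ₗ[R] B'} {d : D →ₗ[R] D'}
    (hf : f' ∘ₗ a = b ∘ₗ f) (hg : g' ∘ₗ b = d ∘ₗ g) (ha : Function.Bijective a)
    (hd : Function.Bijective d) : Function.Bijective b :=
  LinearMap.bijective_of_surjective_of_bijective_of_bijective_of_injective
    (0 : Unit →ₗ[R] A) f g (0 : D →ₗ[R] Unit) (0 : Unit →ₗ[R] A') f' g' (0 : D' →ₗ[R] Unit)
    0 a b d 0 (by simp) hf hg (by simp)
    ((LinearMap.exact_zero_iff_injective _ _).2 h.injective) h.exact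
    ((LinearMap.exact_zero_iff_surjective _ _).2 h.surjective)
    ((LinearMap.exact_zero_iff_injective _ _).2 h'.injective) h'.exact
    ((LinearMap.exact_zero_iff_surjective _ _).2 h'.surjective)
    (fun _ ↦ ⟨0, rfl⟩) ha hd (fun _ _ _ ↦ rfl)

/-- The fibre product `A ×_D B` of two linear maps `f : A → D` and `g : B → D`. -/
def fiberProduct (f : A →ₗ[R] D) (g : B →ₗ[R] D) : Submodule R (A × B) :=
  LinearMap.eqLocus (f ∘ₗ LinearMap.fst R A B) (g ∘ₗ LinearMap.snd R A B)

namespace fiberProduct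

/-- The first projection `A ×_D B → A`. -/
abbrev fst (f : A →ₗ[R] D) (g : B →ₗ[R] D) : fiberProduct f g →ₗ[R] A :=
  LinearMap.fst R A B ∘ₗ (fiberProduct f g).subtype

/-- The second projection `A ×_D B → B`. -/
abbrev snd (f : A →ₗ[R] D) (g : B →ₗ[R] D) : fiberProduct f g →ₗ[R] B :=
  LinearMap.snd R A B ∘ₗ (fiberProduct f g).subtype

theorem condition {f : A →ₗ[R] D} {g : B →ₗ[R] D} (z : fiberProduct f g) :
    f (fst f g z) = g (snd f g z) := z.2

theorem exists_isShortExact_fst {i : P →ₗ[R] B} {g : B →ₗ[R] D} (h : IsShortExact i g)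
    (f : A →ₗ[R] D) : ∃ j : P →ₗ[R] fiberProduct f g, IsShortExact j (fst f g) := by
  refine ⟨(LinearMap.inr R A B ∘ₗ i).codRestrict _ fun k ↦ ?_, fun k k' hk ↦ ?_, ?_, fun a ↦ ?_⟩
  · exact (map_zero f).trans (h.exact.apply_apply_eq_zero k).symm
  · exact h.injective congr($hk.1.2)
  · refine fun z ↦ ⟨fun hz ↦ ?_, ?_⟩
    · obtain ⟨k, hk⟩ := (h.exact (snd f g z)).1 (by rw [← condition, hz, map_zero])
      exact ⟨k, Subtype.ext (Prod.ext hz.symm hk)⟩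
    · rintro ⟨k, rfl⟩
      rfl
  · obtain ⟨b, hb⟩ := h.surjective (f a)
    exact ⟨⟨(a, b), hb.symm⟩, rfl⟩

theorem exists_isShortExact_snd {i : P →ₗ[R] A} {f : A →ₗ[R] D} (h : IsShortExact i f)
    (g : B →ₗ[R] D) : ∃ j : P →ₗ[R] fiberProduct f g, IsShortExact j (snd f g) := by
  refine ⟨(LinearMap.inl R A B ∘ₗ i).codRestrict _ fun k ↦ ?_, fun k k' hk ↦ ?_, ?_, fun b ↦ ?_⟩
  · exact (h.exact.apply_apply_eq_zero k).trans (map_zero g).symm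
  · exact h.injective congr($hk.1.1)
  · refine fun z ↦ ⟨fun hz ↦ ?_, ?_⟩
    · obtain ⟨k, hk⟩ := (h.exact (fst f g z)).1 (by rw [condition, hz, map_zero])
      exact ⟨k, Subtype.ext (Prod.ext hk hz.symm)⟩
    · rintro ⟨k, rfl⟩
      rfl
  · obtain ⟨a, ha⟩ := h.surjective (g b)
    exact ⟨⟨(a, b), ha⟩, rfl⟩

theorem isShortExact_snd_comp {f : A →ₗ[R] B} {g : B →ₗ[R] D} (h : IsShortExact f g)
    {p : P →ₗ[R] B} (hp : Function.Surjective p) : IsShortExact (snd f p) (g ∘ₗ p) := by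
  refine ⟨fun z w hzw ↦ ?_, fun y ↦ ⟨fun hy ↦ ?_, ?_⟩, h.surjective.comp hp⟩
  · refine Subtype.ext (Prod.ext (h.injective ?_) hzw)
    exact (condition z).trans ((congrArg p hzw).trans (condition w).symm)
  · obtain ⟨a, ha⟩ := (h.exact (p y)).1 hy
    exact ⟨⟨(a, y), ha⟩, rfl⟩
  · rintro ⟨z, rfl⟩
    exact (congrArg g (condition z).symm).trans (h.exact.apply_apply_eq_zero _)

end fiberProduct

end ShortExact

section ExtVanishing

/-- `M` is left orthogonal to `C`: all higher `Ext` modules `Ext_R^i(M, C)`, `i > 0`, vanish. -/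
def ExtVanishing (C M : ModuleCat.{u} R) : Prop :=
  ∀ i : ℕ, 0 < i → Subsingleton (ExtM R M C i)

variable {C A B D : ModuleCat.{u} R}

theorem extVanishing_iff_ext : ExtVanishing C A ↔
    ∀ i : ℕ, Subsingleton (Abelian.Ext.{u} A C (i + 1)) :=
  ⟨fun h i ↦ (extMEquiv A C i).toEquiv.subsingleton_congr.1 (h (i + 1) i.succ_pos), fun h i hi ↦ by
    obtain ⟨i, rfl⟩ := Nat.exists_eq_succ_of_ne_zero hi.ne'
    exact (extMEquiv A C i).toEquiv.subsingleton_congr.2 (h i)⟩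

theorem ExtVanishing.of_projective (C : ModuleCat.{u} R) (hP : Module.Projective R A) :
    ExtVanishing C A := by
  have : Projective A := (IsProjective.iff_projective A).1 hP
  exact extVanishing_iff_ext.2 fun i ↦ Abelian.Ext.subsingleton_of_projective _ _ _

theorem ExtVanishing.of_retract (h : ExtVanishing C B) {s : A →ₗ[R] B} {r : B →ₗ[R] A}
    (hrs : r ∘ₗ s = LinearMap.id) : ExtVanishing C A := by
  rw [extVanishing_iff_ext] at h ⊢
  refine fun i ↦ subsingleton_of_forall_eq 0 fun x ↦ ?_
  have hid : ModuleCat.ofHom s ≫ ModuleCat.ofHom r = 𝟙 A := ModuleCat.hom_ext hrs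
  rw [← Abelian.Ext.mk₀_id_comp x, ← hid, ← Abelian.Ext.mk₀_comp_mk₀_assoc,
    Subsingleton.elim ((Abelian.Ext.mk₀ (ModuleCat.ofHom r)).comp x _) 0, Abelian.Ext.comp_zero]

namespace IsShortExact

variable {f : A →ₗ[R] B} {g : B →ₗ[R] D}

/-- The linear maps of a short exact sequence as a short complex in `ModuleCat R`. -/
abbrev shortComplex (h : IsShortExact f g) : ShortComplex (ModuleCat.{u} R) :=
  ShortComplex.mk (ModuleCat.ofHom f) (ModuleCat.ofHom g)
    (ModuleCat.hom_ext h.exact.linearMap_comp_eq_zero)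

theorem shortExact (h : IsShortExact f g) : h.shortComplex.ShortExact :=
  ModuleCat.shortComplex_shortExact _ h.exact h.injective h.surjective

theorem extVanishing_mid (h : IsShortExact f g) (hA : ExtVanishing C A) (hD : ExtVanishing C D) :
    ExtVanishing C B := by
  rw [extVanishing_iff_ext] at *
  refine fun i ↦ subsingleton_of_forall_eq 0 fun x ↦ ?_
  have := hA i
  have := hD i
  obtain ⟨y, rfl⟩ := Abelian.Ext.contravariant_sequence_exact₂ h.shortExact C x
    (Subsingleton.elim _ _)
  rw [Subsingleton.elim y 0, Abelian.Ext.comp_zero]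

/-- The connecting map `Ext^i(A, C) → Ext^{i+1}(D, C)`. -/
abbrev connecting (h : IsShortExact f g) (C : ModuleCat.{u} R) (i : ℕ) :
    Abelian.Ext.{u} A C i →ₗ[R] Abelian.Ext.{u} D C (i + 1) :=
  h.shortExact.extClass.precompOfLinear R C (add_comm 1 i)

theorem connecting_surjective (h : IsShortExact f g) (hB : ExtVanishing C B) (i : ℕ) :
    Function.Surjective (h.connecting C i) := fun x ↦
  have := extVanishing_iff_ext.1 hB i
  Abelian.Ext.contravariant_sequence_exact₃ h.shortExact C x (Subsingleton.elim _ _) (add_comm 1 i)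

theorem connecting_succ_injective (h : IsShortExact f g) (hB : ExtVanishing C B) (i : ℕ) :
    Function.Injective (h.connecting C (i + 1)) := by
  refine (injective_iff_map_eq_zero _).2 fun x hx ↦ ?_
  have := extVanishing_iff_ext.1 hB i
  obtain ⟨y, rfl⟩ :=
    Abelian.Ext.contravariant_sequence_exact₁ h.shortExact C x (add_comm 1 (i + 1)) hx
  rw [Subsingleton.elim y 0, Abelian.Ext.comp_zero]

/-- Dimension shift along a short exact sequence whose middle term is left orthogonal to `C`. -/
def extMShift (h : IsShortExact f g) (hB : ExtVanishing C B) (i : ℕ) :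
    ExtM R D C (i + 2) ≃ₗ[R] ExtM R A C (i + 1) :=
  extMEquiv D C (i + 1) ≪≫ₗ
    (LinearEquiv.ofBijective (h.connecting C (i + 1))
      ⟨h.connecting_succ_injective hB i, h.connecting_surjective hB (i + 1)⟩).symm ≪≫ₗ
    (extMEquiv A C i).symm

/-- The connecting map `Hom(A, C) → Ext¹(D, C)`. -/
def homConnecting (h : IsShortExact f g) (C : ModuleCat.{u} R) :
    (A →ₗ[R] C) →ₗ[R] Abelian.Ext.{u} D C 1 :=
  h.connecting C 0 ∘ₗ
    ((ModuleCat.homLinearEquiv (S := R)).symm ≪≫ₗ Abelian.Ext.linearEquiv₀.symm).toLinearMap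

theorem ker_homConnecting (h : IsShortExact f g) :
    LinearMap.ker (h.homConnecting C) = LinearMap.range (LinearMap.lcomp R C f) := by
  ext φ
  rw [LinearMap.mem_ker]
  refine ⟨fun hφ ↦ ?_, ?_⟩
  · obtain ⟨y, hy⟩ := Abelian.Ext.contravariant_sequence_exact₁ h.shortExact C
      (Abelian.Ext.mk₀ (ModuleCat.ofHom φ)) (add_comm 1 0) hφ
    obtain ⟨ψ, rfl⟩ := (Abelian.Ext.mk₀_bijective _ _).2 y
    rw [Abelian.Ext.mk₀_comp_mk₀] at hy
    exact ⟨ψ.hom, congr($((Abelian.Ext.mk₀_bijective _ _).1 hy).hom)⟩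
  · rintro ⟨ψ, rfl⟩
    change h.shortExact.extClass.comp
      (Abelian.Ext.mk₀ (h.shortComplex.f ≫ ModuleCat.ofHom ψ)) (add_comm 1 0) = 0
    rw [← Abelian.Ext.mk₀_comp_mk₀, h.shortExact.extClass_comp_assoc]

/-- `Ext¹(D, C)` as the cokernel of `Hom(B, C) → Hom(A, C)`. -/
def extMOneEquiv (h : IsShortExact f g) (hB : ExtVanishing C B) :
    ExtM R D C 1 ≃ₗ[R] (A →ₗ[R] C) ⧸ LinearMap.range (LinearMap.lcomp R C f) :=
  extMEquiv D C 0 ≪≫ₗ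
    ((h.homConnecting C).quotKerEquivOfSurjective
      ((h.connecting_surjective hB 0).comp (LinearEquiv.surjective _))).symm ≪≫ₗ
    Submodule.quotEquivOfEq _ _ h.ker_homConnecting

theorem lcomp_surjective_iff (h : IsShortExact f g) (hB : ExtVanishing C B) :
    Function.Surjective (LinearMap.lcomp R C f) ↔ Subsingleton (ExtM R D C 1) := by
  rw [(h.extMOneEquiv hB).toEquiv.subsingleton_congr, Submodule.Quotient.subsingleton_iff,
    LinearMap.range_eq_top]

theorem extVanishing_left (h : IsShortExact f g) (hB : ExtVanishing C B) (hD : ExtVanishing C D) :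
    ExtVanishing C A := fun i hi ↦ by
  obtain ⟨i, rfl⟩ := Nat.exists_eq_succ_of_ne_zero hi.ne'
  exact (h.extMShift hB i).toEquiv.subsingleton_congr.1 (hD (i + 2) (Nat.succ_pos _))

theorem extVanishing_right (h : IsShortExact f g) (hA : ExtVanishing C A) (hB : ExtVanishing C B)
    (hf : Function.Surjective (LinearMap.lcomp R C f)) : ExtVanishing C D
  | 0, hi => absurd hi (lt_irrefl 0)
  | 1, _ => (h.lcomp_surjective_iff hB).1 hf
  | i + 2, _ => (h.extMShift hB i).toEquiv.subsingleton_congr.2 (hA (i + 1) (Nat.succ_pos i))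

end IsShortExact

end ExtVanishing

section Dual

variable {A B D : Type*} [AddCommGroup A] [Module R A] [AddCommGroup B] [Module R B]
  [AddCommGroup D] [Module R D] {f : A →ₗ[R] B} {g : B →ₗ[R] D}

theorem IsShortExact.dual (h : IsShortExact f g) {C : Type*} [AddCommGroup C] [Module R C]
    (hf : Function.Surjective (LinearMap.lcomp R C f)) :
    IsShortExact (LinearMap.lcomp R C g) (LinearMap.lcomp R C f) :=
  ⟨LinearMap.lcomp_injective_of_surjective g h.surjective,
    LinearMap.exact_lcomp_of_exact_of_surjective C h.exact h.surjective, hf⟩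

/-- The `C`-dual `M^C = Hom_R(M, C)`. -/
abbrev cDual (C M : ModuleCat.{u} R) : ModuleCat.{u} R := ModuleCat.of R (M →ₗ[R] C)

variable {C M N : ModuleCat.{u} R}

theorem lcomp_lcomp_comp_bidualityMap (f : M →ₗ[R] N) :
    LinearMap.lcomp R C (LinearMap.lcomp R C f) ∘ₗ bidualityMap R C M =
      bidualityMap R C N ∘ₗ f := rfl

theorem bidualityMap_bijective_of_retract (hN : Function.Bijective (bidualityMap R C N))
    {s : M →ₗ[R] N} {r : N →ₗ[R] M} (hrs : r ∘ₗ s = LinearMap.id) :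
    Function.Bijective (bidualityMap R C M) := by
  have hrs' (x : M) : r (s x) = x := congr($hrs x)
  refine ⟨.of_comp (f := LinearMap.lcomp R C (LinearMap.lcomp R C s))
    (hN.1.comp (Function.LeftInverse.injective hrs')), fun φ ↦ ?_⟩
  obtain ⟨y, hy⟩ := hN.2 (φ ∘ₗ LinearMap.lcomp R C s)
  refine ⟨r y, LinearMap.ext fun ψ ↦ ?_⟩
  calc ψ (r y) = φ (ψ ∘ₗ r ∘ₗ s) := congr($hy (ψ ∘ₗ r))
    _ = φ ψ := by rw [hrs, LinearMap.comp_id]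

theorem bidualityMap_cDual_bijective (hM : Function.Bijective (bidualityMap R C M)) :
    Function.Bijective (bidualityMap R C (cDual C M)) := by
  have h : Function.Bijective (LinearMap.lcomp R C (bidualityMap R C M)) :=
    ((LinearEquiv.ofBijective _ hM).congrLeft C R).symm.bijective
  exact (Function.Bijective.of_comp_iff' h _).1 Function.bijective_id

end Dual

namespace IsTotallyCReflexive

variable {C M N A B D : ModuleCat.{u} R}

theorem of_retract (hN : IsTotallyCReflexive R C N) {s : M →ₗ[R] N} {r : N →ₗ[R] M}
    (hrs : r ∘ₗ s = LinearMap.id) : IsTotallyCReflexive R C M := by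
  obtain ⟨hfin, hbij, hext, hext_dual⟩ := hN
  refine ⟨.of_surjective r fun x ↦ ⟨s x, congr($hrs x)⟩,
    bidualityMap_bijective_of_retract hbij hrs, ExtVanishing.of_retract hext hrs, ?_⟩
  refine ExtVanishing.of_retract (A := cDual C M) (B := cDual C N)
    (s := LinearMap.lcomp R C r) (r := LinearMap.lcomp R C s) hext_dual ?_
  ext φ x
  exact congr(φ ($hrs x))

theorem congr (e : M ≃ₗ[R] N) (hN : IsTotallyCReflexive R C N) : IsTotallyCReflexive R C M :=
  hN.of_retract (s := e.toLinearMap) (r := e.symm.toLinearMap) e.symm_comp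

theorem dual [IsNoetherianRing R] (hC : IsSemidualizing R C) (hM : IsTotallyCReflexive R C M) :
    IsTotallyCReflexive R C (cDual C M) := by
  obtain ⟨hfin, hbij, hext, hext_dual⟩ := hM
  have := hC.1
  exact ⟨inferInstance, bidualityMap_cDual_bijective hbij, hext_dual,
    ExtVanishing.of_retract hext (LinearEquiv.ofBijective _ hbij).comp_symm⟩

theorem of_cDual [IsNoetherianRing R] (hC : IsSemidualizing R C)
    (hM : Function.Bijective (bidualityMap R C M)) (h : IsTotallyCReflexive R C (cDual C M)) :
    IsTotallyCReflexive R C M :=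
  (h.dual hC).congr (LinearEquiv.ofBijective _ hM)

variable {f : A →ₗ[R] B} {g : B →ₗ[R] D}

theorem mid (h : IsShortExact f g) (hA : IsTotallyCReflexive R C A)
    (hD : IsTotallyCReflexive R C D) : IsTotallyCReflexive R C B := by
  obtain ⟨finA, bijA, extA, extA'⟩ := hA
  obtain ⟨finD, bijD, extD, extD'⟩ := hD
  have extB : ExtVanishing C B := h.extVanishing_mid extA extD
  have hdual := h.dual ((h.lcomp_surjective_iff extB).2 (extD 1 one_pos))
  have extB' : ExtVanishing C (cDual C B) :=
    IsShortExact.extVanishing_mid (A := cDual C D) (D := cDual C A) hdual extD' extA'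
  have hddual := hdual.dual ((IsShortExact.lcomp_surjective_iff (A := cDual C D) (D := cDual C A)
    hdual extB').2 (extA' 1 one_pos))
  refine ⟨.of_exact h.exact h.surjective, ?_, extB, extB'⟩
  exact h.bijective_mid hddual (lcomp_lcomp_comp_bidualityMap f) (lcomp_lcomp_comp_bidualityMap g)
    bijA bijD

theorem left [IsNoetherianRing R] (h : IsShortExact f g) (hB : IsTotallyCReflexive R C B)
    (hD : IsTotallyCReflexive R C D) : IsTotallyCReflexive R C A := by
  obtain ⟨finB, bijB, extB, extB'⟩ := hB
  obtain ⟨-, bijD, extD, extD'⟩ := hD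
  have hdual := h.dual ((h.lcomp_surjective_iff extB).2 (extD 1 one_pos))
  have hsurj : Function.Surjective (LinearMap.lcomp R C (LinearMap.lcomp R C g)) :=
    .of_comp (g := bidualityMap R C B) (bijD.2.comp h.surjective)
  refine ⟨.of_injective f h.injective, ?_, h.extVanishing_left extB extD,
    IsShortExact.extVanishing_right (A := cDual C D) (B := cDual C B) (D := cDual C A)
      hdual extD' extB' hsurj⟩
  exact LinearMap.bijective_of_bijective_of_injective_of_left_exact _ _ _ _ _ _ _
    (lcomp_lcomp_comp_bidualityMap f) (lcomp_lcomp_comp_bidualityMap g)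
    h.exact (hdual.dual hsurj).exact bijB bijD.1 h.injective (hdual.dual hsurj).injective

theorem of_subsingleton [Subsingleton M] : IsTotallyCReflexive R C M :=
  have : Subsingleton (M →ₗ[R] C) := inferInstance
  ⟨inferInstance, ⟨Function.injective_of_subsingleton _, fun _ ↦ ⟨0, Subsingleton.elim _ _⟩⟩,
    ExtVanishing.of_projective C inferInstance,
    ExtVanishing.of_projective C (inferInstanceAs (Module.Projective R (M →ₗ[R] C)))⟩

theorem self (hC : IsSemidualizing R C) : IsTotallyCReflexive R C (ModuleCat.of R R) := by
  obtain ⟨-, hhomothety, hext⟩ := hC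
  refine ⟨.self R, ?_, ExtVanishing.of_projective C (inferInstanceAs (Module.Projective R R)), ?_⟩
  · have h := ((LinearMap.ringLmapEquivSelf R R C).congrLeft C R).bijective
    refine (Function.Bijective.of_comp_iff' h _).1 ?_
    convert hhomothety using 1
    ext r c
    simp [bidualityMap, LinearEquiv.congrLeft]
  · exact ExtVanishing.of_retract hext (LinearMap.ringLmapEquivSelf R R C).symm_comp

theorem pi (hC : IsSemidualizing R C) :
    ∀ n : ℕ, IsTotallyCReflexive R C (ModuleCat.of R (Fin n → R))
  | 0 => of_subsingleton (M := ModuleCat.of R (Fin 0 → R))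
  | n + 1 => by
    have h : IsShortExact (LinearMap.inl R R (Fin n → R)) (LinearMap.snd R R (Fin n → R)) :=
      ⟨LinearMap.inl_injective, .inl_snd, LinearMap.snd_surjective⟩
    exact (mid (A := ModuleCat.of R R) (B := ModuleCat.of R (R × (Fin n → R)))
      (D := ModuleCat.of R (Fin n → R)) h (self hC) (pi hC n)).congr
        (M := ModuleCat.of R (Fin (n + 1) → R)) (Fin.consLinearEquiv R fun _ ↦ R).symm

theorem of_projective (hC : IsSemidualizing R C) (hfin : Module.Finite R M)
    (hM : Module.Projective R M) : IsTotallyCReflexive R C M := by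
  obtain ⟨n, r, s, -, -, hrs⟩ := Module.Finite.exists_comp_eq_id_of_projective R M
  exact (pi hC n).of_retract hrs

end IsTotallyCReflexive

section GCDimension

variable {C M N K X A B D : ModuleCat.{u} R}

theorem gcdimLE_succ_iff {n : ℕ} : gcdimLE R C (n + 1) M ↔
    ∃ (X K : ModuleCat.{u} R) (f : K →ₗ[R] X) (g : X →ₗ[R] M),
      IsShortExact f g ∧ IsTotallyCReflexive R C X ∧ gcdimLE R C n K := by
  refine exists₄_congr fun X K f g ↦ ⟨?_, ?_⟩
  · rintro ⟨hf, hg, hfg, hX, hK⟩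
    exact ⟨⟨hf, LinearMap.exact_iff.2 hfg, hg⟩, hX, hK⟩
  · rintro ⟨h, hX, hK⟩
    exact ⟨h.injective, h.surjective, h.exact.linearMap_ker_eq, hX, hK⟩

theorem gcdimLE.finite : ∀ {n : ℕ}, gcdimLE R C n M → Module.Finite R M
  | 0, h => h.1
  | _ + 1, h => by
    obtain ⟨X, K, f, g, h, ⟨hX, -⟩, -⟩ := gcdimLE_succ_iff.1 h
    exact .of_surjective g h.surjective

theorem gcdimLE.congr (e : M ≃ₗ[R] N) : ∀ {n : ℕ}, gcdimLE R C n M → gcdimLE R C n N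
  | 0, h => IsTotallyCReflexive.congr e.symm h
  | n + 1, h => by
    obtain ⟨X, K, f, g, h, hX, hK⟩ := gcdimLE_succ_iff.1 h
    refine gcdimLE_succ_iff.2 ⟨X, K, f, e.toLinearMap ∘ₗ g, ⟨h.injective, ?_, ?_⟩, hX, hK⟩
    · exact h.exact.comp_injective e e.injective e.map_zero
    · exact e.surjective.comp h.surjective

theorem gcdimLE_congr (e : M ≃ₗ[R] N) {n : ℕ} : gcdimLE R C n M ↔ gcdimLE R C n N :=
  ⟨.congr e, .congr e.symm⟩

theorem gcdimLE.succ : ∀ {n : ℕ} {M : ModuleCat.{u} R}, gcdimLE R C n M → gcdimLE R C (n + 1) M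
  | 0, M, h => by
    refine gcdimLE_succ_iff.2 ⟨M, ModuleCat.of R PUnit, 0, LinearMap.id, ?_, h,
      IsTotallyCReflexive.of_subsingleton⟩
    exact ⟨Function.injective_of_subsingleton _,
      (LinearMap.exact_zero_iff_injective _ _).2 Function.injective_id, Function.surjective_id⟩
  | n + 1, M, h => by
    obtain ⟨X, K, f, g, h, hX, hK⟩ := gcdimLE_succ_iff.1 h
    exact gcdimLE_succ_iff.2 ⟨X, K, f, g, h, hX, hK.succ⟩

theorem gcdimLE.mono {m n : ℕ} (hmn : m ≤ n) (h : gcdimLE R C m M) : gcdimLE R C n M :=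
  Nat.le_induction h (fun _ _ ↦ gcdimLE.succ) n hmn

theorem gcdimLE_succ_iff_syzygy_of_middle {n : ℕ}
    (hmiddle : ∀ {A B D : ModuleCat.{u} R} {f : A →ₗ[R] B} {g : B →ₗ[R] D}, IsShortExact f g →
      IsTotallyCReflexive R C D → (gcdimLE R C n A ↔ gcdimLE R C n B))
    {i : K →ₗ[R] X} {p : X →ₗ[R] M} (h : IsShortExact i p) (hX : IsTotallyCReflexive R C X) :
    gcdimLE R C (n + 1) M ↔ gcdimLE R C n K := by
  refine ⟨fun hM ↦ ?_, fun hK ↦ gcdimLE_succ_iff.2 ⟨X, K, i, p, h, hX, hK⟩⟩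
  obtain ⟨X', K', i', p', h', hX', hK'⟩ := gcdimLE_succ_iff.1 hM
  obtain ⟨j, hj⟩ := fiberProduct.exists_isShortExact_snd h p'
  obtain ⟨j', hj'⟩ := fiberProduct.exists_isShortExact_fst h' p
  have hZ : gcdimLE R C n (ModuleCat.of R (fiberProduct p p')) := (hmiddle hj' hX).1 hK'
  exact (hmiddle (B := ModuleCat.of R (fiberProduct p p')) hj hX').2 hZ

theorem gcdimLE_middle_iff [IsNoetherianRing R] (hC : IsSemidualizing R C) :
    ∀ {n : ℕ} {A B D : ModuleCat.{u} R} {f : A →ₗ[R] B} {g : B →ₗ[R] D}, IsShortExact f g →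
      IsTotallyCReflexive R C D → (gcdimLE R C n A ↔ gcdimLE R C n B)
  | 0, A, B, D, f, g, h, hD => ⟨fun hA ↦ hA.mid h hD, fun hB ↦ hB.left h hD⟩
  | n + 1, A, B, D, f, g, h, hD => by
    suffices hB : Module.Finite R B → (gcdimLE R C (n + 1) A ↔ gcdimLE R C (n + 1) B) by
      refine ⟨fun hA ↦ (hB ?_).1 hA, fun hB' ↦ (hB hB'.finite).2 hB'⟩
      have := hA.finite
      have := hD.1
      exact .of_exact h.exact h.surjective
    intro hB
    obtain ⟨k, p, hp⟩ := Module.Finite.exists_fin' R B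
    have hP := IsTotallyCReflexive.pi hC k
    have hker := isShortExact_ker_subtype hp
    obtain ⟨j, hj⟩ := fiberProduct.exists_isShortExact_fst hker f
    have hQ : IsTotallyCReflexive R C (ModuleCat.of R (fiberProduct f p)) :=
      IsTotallyCReflexive.left (B := ModuleCat.of R (Fin k → R))
        (fiberProduct.isShortExact_snd_comp h hp) hP hD
    calc gcdimLE R C (n + 1) A ↔ gcdimLE R C n (ModuleCat.of R (LinearMap.ker p)) :=
          gcdimLE_succ_iff_syzygy_of_middle (gcdimLE_middle_iff hC) hj hQ
      _ ↔ gcdimLE R C (n + 1) B :=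
          (gcdimLE_succ_iff_syzygy_of_middle (K := ModuleCat.of R (LinearMap.ker p))
            (gcdimLE_middle_iff hC) hker hP).symm

theorem gcdimLE_succ_iff_syzygy [IsNoetherianRing R] (hC : IsSemidualizing R C) {n : ℕ}
    {i : K →ₗ[R] X} {p : X →ₗ[R] M} (h : IsShortExact i p) (hX : IsTotallyCReflexive R C X) :
    gcdimLE R C (n + 1) M ↔ gcdimLE R C n K :=
  gcdimLE_succ_iff_syzygy_of_middle (gcdimLE_middle_iff hC) h hX

end GCDimension

section Cokernel

variable {X Y Z : Type*} [AddCommGroup X] [Module R X] [AddCommGroup Y] [Module R Y]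
  [AddCommGroup Z] [Module R Z] {a : X →ₗ[R] Y} {b : Y →ₗ[R] Z}

theorem isShortExact_mkQ (ha : Function.Injective a) :
    IsShortExact a (LinearMap.range a).mkQ :=
  ⟨ha, LinearMap.exact_map_mkQ_range a, Submodule.mkQ_surjective _⟩

theorem exists_isShortExact_coker_of_exact (h : Function.Exact a b) :
    ∃ j : (Y ⧸ LinearMap.range a) →ₗ[R] Z, IsShortExact j (LinearMap.range b).mkQ := by
  refine ⟨(LinearMap.range a).liftQ b h.linearMap_ker_eq.ge,
    LinearMap.injective_range_liftQ_of_exact h, ?_, Submodule.mkQ_surjective _⟩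
  rw [LinearMap.exact_iff, Submodule.ker_mkQ, Submodule.range_liftQ]

theorem exists_isShortExact_coker_comp {c : X →ₗ[R] Z} (hc : b ∘ₗ a = c)
    (hb : Function.Injective b) :
    ∃ (j : (Y ⧸ LinearMap.range a) →ₗ[R] (Z ⧸ LinearMap.range c))
      (q : (Z ⧸ LinearMap.range c) →ₗ[R] (Z ⧸ LinearMap.range b)), IsShortExact j q := by
  subst hc
  have hle : LinearMap.range (b ∘ₗ a) ≤ LinearMap.range b := LinearMap.range_comp_le_range a b
  have hcomap : (LinearMap.range (b ∘ₗ a)).comap b = LinearMap.range a := by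
    rw [LinearMap.range_comp, Submodule.comap_map_eq_of_injective hb]
  refine ⟨(LinearMap.range a).mapQ _ b hcomap.ge, Submodule.factor hle, ?_, ?_,
    Submodule.factor_surjective hle⟩
  · rw [← LinearMap.ker_eq_bot, Submodule.ker_mapQ, hcomap, Submodule.mkQ_map_self]
  · rw [LinearMap.exact_iff, Submodule.range_mapQ, Submodule.ker_mapQ, Submodule.comap_id]

end Cokernel

section Transpose

variable {P1 P0 M : Type u} [AddCommGroup P1] [Module R P1] [AddCommGroup P0] [Module R P0]
  [AddCommGroup M] [Module R M] {d : P1 →ₗ[R] P0} {π : P0 →ₗ[R] M}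

/-- `P1 → P0 → M → 0` is a presentation of `M` by finite projective modules, not necessarily
minimal. -/
structure IsProjectivePresentation (d : P1 →ₗ[R] P0) (π : P0 →ₗ[R] M) : Prop where
  finite_left : Module.Finite R P1
  projective_left : Module.Projective R P1
  finite_right : Module.Finite R P0
  projective_right : Module.Projective R P0
  exact : Function.Exact d π
  surjective : Function.Surjective π

/-- The cokernel of `d^C : P0^C → P1^C`, which is the transpose of `M` with respect to `C` when
`d : P1 → P0` presents `M`. -/
abbrev cokerDual (C : ModuleCat.{u} R) (d : P1 →ₗ[R] P0) : ModuleCat.{u} R :=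
  ModuleCat.of R ((P1 →ₗ[R] C) ⧸ LinearMap.range (LinearMap.lcomp R C d))

namespace IsProjectivePresentation

theorem isShortExact (h : IsProjectivePresentation d π) :
    IsShortExact (LinearMap.range d).subtype π :=
  isShortExact_range_subtype h.exact h.surjective

theorem exists_syzygy [IsNoetherianRing R] (h : IsProjectivePresentation d π) :
    ∃ (n : ℕ) (d₂ : (Fin n → R) →ₗ[R] P1), IsProjectivePresentation d₂ d.rangeRestrict := by
  have := h.finite_left
  obtain ⟨n, p, hp⟩ := Module.Finite.exists_fin' R (LinearMap.ker d)
  refine ⟨n, (LinearMap.ker d).subtype ∘ₗ p, inferInstance, inferInstance, h.finite_left,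
    h.projective_left, ?_, d.surjective_rangeRestrict⟩
  rw [LinearMap.exact_iff, LinearMap.ker_rangeRestrict, LinearMap.range_comp_of_range_eq_top _
    (LinearMap.range_eq_top.2 hp), Submodule.range_subtype]

variable {C : ModuleCat.{u} R}

theorem extVanishing_left (h : IsProjectivePresentation d π) :
    ExtVanishing C (ModuleCat.of R P1) :=
  .of_projective C h.projective_left

theorem extVanishing_right (h : IsProjectivePresentation d π) :
    ExtVanishing C (ModuleCat.of R P0) :=
  .of_projective C h.projective_right

theorem isTotallyCReflexive_left (h : IsProjectivePresentation d π) (hC : IsSemidualizing R C) :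
    IsTotallyCReflexive R C (ModuleCat.of R P1) :=
  .of_projective hC h.finite_left h.projective_left

theorem isTotallyCReflexive_right (h : IsProjectivePresentation d π) (hC : IsSemidualizing R C) :
    IsTotallyCReflexive R C (ModuleCat.of R P0) :=
  .of_projective hC h.finite_right h.projective_right

/-- `Ext¹(M, C)` as the cokernel of the restriction map `P0^C → (range d)^C`. -/
def extMOneEquiv (h : IsProjectivePresentation d π) (C : ModuleCat.{u} R) :
    ExtM R (ModuleCat.of R M) C 1 ≃ₗ[R]
      cokerDual C (LinearMap.range d).subtype :=
  IsShortExact.extMOneEquiv (A := ModuleCat.of R (LinearMap.range d)) (B := ModuleCat.of R P0)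
    (D := ModuleCat.of R M) h.isShortExact h.extVanishing_right

theorem lcomp_range_subtype_surjective (h : IsProjectivePresentation d π)
    (hExt : Subsingleton (ExtM R (ModuleCat.of R M) C 1)) :
    Function.Surjective (LinearMap.lcomp R C (LinearMap.range d).subtype) :=
  (IsShortExact.lcomp_surjective_iff (A := ModuleCat.of R (LinearMap.range d))
    (B := ModuleCat.of R P0) h.isShortExact h.extVanishing_right).2 hExt

/-- Dimension shift from `M` to the syzygy `range d`. -/
def extMShift (h : IsProjectivePresentation d π) (C : ModuleCat.{u} R) (i : ℕ) :
    ExtM R (ModuleCat.of R M) C (i + 2) ≃ₗ[R]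
      ExtM R (ModuleCat.of R (LinearMap.range d)) C (i + 1) :=
  IsShortExact.extMShift (A := ModuleCat.of R (LinearMap.range d)) (B := ModuleCat.of R P0)
    (D := ModuleCat.of R M) h.isShortExact h.extVanishing_right i

end IsProjectivePresentation

theorem exists_isShortExact_cokerDual (C : ModuleCat.{u} R) (d : P1 →ₗ[R] P0) :
    ∃ (j : cokerDual C (LinearMap.range d).subtype →ₗ[R] cokerDual C d)
      (q : cokerDual C d →ₗ[R] cokerDual C d.rangeRestrict), IsShortExact j q :=
  exists_isShortExact_coker_comp rfl
    (LinearMap.lcomp_injective_of_surjective _ d.surjective_rangeRestrict)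

/-- If every map `range d → C` extends to `P0`, the cokernel of `d^C` only depends on the
corestriction of `d` to its range. -/
def cokerDualRangeEquiv {C : ModuleCat.{u} R}
    (hd : Function.Surjective (LinearMap.lcomp R C (LinearMap.range d).subtype)) :
    cokerDual C d ≃ₗ[R] cokerDual C d.rangeRestrict :=
  Submodule.quotEquivOfEq _ _ <|
    LinearMap.range_comp_of_range_eq_top (LinearMap.lcomp R C d.rangeRestrict)
      (LinearMap.range_eq_top.2 hd)

/-- For `0 → A → P → K → 0` with `P^C → A^C` surjective, the cokernel of `K^C → P^C` is `A^C`. -/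
def IsShortExact.cokerDualEquiv {C : ModuleCat.{u} R} {f : M →ₗ[R] P1} {g : P1 →ₗ[R] P0}
    (h : IsShortExact f g) (hf : Function.Surjective (LinearMap.lcomp R C f)) :
    cokerDual C g ≃ₗ[R] cDual C (ModuleCat.of R M) :=
  (h.dual hf).exact.linearEquivOfSurjective hf

section GCDimensionTranspose

variable [IsNoetherianRing R] {C : ModuleCat.{u} R}

theorem gcdimLE_cokerDual_iff_ext_one (hC : IsSemidualizing R C)
    (h : IsProjectivePresentation d π) (hM : gcdimLE R C 1 (ModuleCat.of R M)) (j : ℕ) :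
    gcdimLE R C j (cokerDual C d) ↔ gcdimLE R C j (ExtM R (ModuleCat.of R M) C 1) := by
  have hK₁ : IsTotallyCReflexive R C (ModuleCat.of R (LinearMap.range d)) :=
    (gcdimLE_succ_iff_syzygy (M := ModuleCat.of R M) (X := ModuleCat.of R P0) hC h.isShortExact
      (h.isTotallyCReflexive_right hC)).1 hM
  have hK₂ := isShortExact_ker_subtype d.surjective_rangeRestrict
  have hK₂_refl := IsTotallyCReflexive.left (A := ModuleCat.of R (LinearMap.ker d.rangeRestrict))
    (B := ModuleCat.of R P1) hK₂ (h.isTotallyCReflexive_left hC) hK₁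
  have hcoker : IsTotallyCReflexive R C (cokerDual C d.rangeRestrict) :=
    (hK₂_refl.dual hC).congr <| hK₂.cokerDualEquiv <|
      (IsShortExact.lcomp_surjective_iff (A := ModuleCat.of R (LinearMap.ker d.rangeRestrict))
        (B := ModuleCat.of R P1) (D := ModuleCat.of R (LinearMap.range d)) hK₂
        h.extVanishing_left).2 (hK₁.2.2.1 1 one_pos)
  obtain ⟨i, q, hiq⟩ := exists_isShortExact_cokerDual C d
  exact (gcdimLE_middle_iff hC hiq hcoker).symm.trans (gcdimLE_congr (h.extMOneEquiv C)).symm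

theorem gcdimLE_cokerDual_iff (hC : IsSemidualizing R C) (m : ℕ) (h : IsProjectivePresentation d π)
    (hM : gcdimLE R C (m + 1) (ModuleCat.of R M))
    (hExt : ∀ i, 0 < i → i ≤ m → Subsingleton (ExtM R (ModuleCat.of R M) C i)) (j : ℕ) :
    gcdimLE R C j (cokerDual C d) ↔
      gcdimLE R C (j + m) (ExtM R (ModuleCat.of R M) C (m + 1)) := by
  induction m generalizing P1 P0 M j with
  | zero => exact gcdimLE_cokerDual_iff_ext_one hC h hM j
  | succ m ih =>
    obtain ⟨n, d₂, hd₂⟩ := h.exists_syzygy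
    have hK₁ : gcdimLE R C (m + 1) (ModuleCat.of R (LinearMap.range d)) :=
      (gcdimLE_succ_iff_syzygy (M := ModuleCat.of R M) (X := ModuleCat.of R P0) hC h.isShortExact
        (h.isTotallyCReflexive_right hC)).1 hM
    have hExtK₁ (i : ℕ) (hi : 0 < i) (him : i ≤ m) :
        Subsingleton (ExtM R (ModuleCat.of R (LinearMap.range d)) C i) := by
      obtain ⟨i, rfl⟩ := Nat.exists_eq_succ_of_ne_zero hi.ne'
      exact (h.extMShift C i).toEquiv.subsingleton_congr.1
        (hExt (i + 2) (Nat.succ_pos _) (Nat.succ_le_succ him))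
    obtain ⟨i, hi⟩ := exists_isShortExact_coker_of_exact
      (LinearMap.exact_lcomp_of_exact_of_surjective C hd₂.exact hd₂.surjective)
    calc gcdimLE R C j (cokerDual C d)
      _ ↔ gcdimLE R C j (cokerDual C d.rangeRestrict) :=
        gcdimLE_congr <| cokerDualRangeEquiv <|
          h.lcomp_range_subtype_surjective (hExt 1 one_pos m.succ_pos)
      _ ↔ gcdimLE R C (j + 1) (cokerDual C d₂) :=
        (gcdimLE_succ_iff_syzygy hC (K := cokerDual C d.rangeRestrict)
          (X := cDual C (ModuleCat.of R (Fin n → R))) (M := cokerDual C d₂) hi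
          ((hd₂.isTotallyCReflexive_left hC).dual hC)).symm
      _ ↔ gcdimLE R C (j + 1 + m) (ExtM R (ModuleCat.of R (LinearMap.range d)) C (m + 1)) :=
        ih hd₂ hK₁ hExtK₁ (j + 1)
      _ ↔ gcdimLE R C (j + (m + 1)) (ExtM R (ModuleCat.of R M) C (m + 1 + 1)) := by
        rw [gcdimLE_congr (h.extMShift C m), add_right_comm, add_assoc]

theorem extVanishing_of_isTotallyCReflexive_cokerDual (hC : IsSemidualizing R C)
    (h : IsProjectivePresentation d π) (hExt : Subsingleton (ExtM R (ModuleCat.of R M) C 1))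
    (hT : IsTotallyCReflexive R C (cokerDual C d)) : ExtVanishing C (ModuleCat.of R M) := by
  have hι := h.lcomp_range_subtype_surjective hExt
  have hT₁ : IsTotallyCReflexive R C (cokerDual C d.rangeRestrict) :=
    hT.congr (cokerDualRangeEquiv hι).symm
  have hP₁ := h.isTotallyCReflexive_left hC
  let K₁ := ModuleCat.of R (LinearMap.range d)
  have hdual := isShortExact_mkQ
    (LinearMap.lcomp_injective_of_surjective (S := R) (N := C) _ d.surjective_rangeRestrict)
  have hinj : Function.Injective (bidualityMap R C K₁) :=
    .of_comp (f := LinearMap.lcomp R C (LinearMap.lcomp R C (LinearMap.range d).subtype))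
      ((h.isTotallyCReflexive_right hC).2.1.1.comp Subtype.val_injective)
  have hsurj : Function.Surjective (bidualityMap R C K₁) := by
    refine .of_comp (g := d.rangeRestrict) ?_
    refine Function.Surjective.comp (g := LinearMap.lcomp R C (LinearMap.lcomp R C d.rangeRestrict))
      ?_ hP₁.2.1.2
    exact (IsShortExact.lcomp_surjective_iff (A := cDual C K₁) (B := cDual C (ModuleCat.of R P1))
      (D := cokerDual C d.rangeRestrict) hdual (hP₁.dual hC).2.2.1).2 (hT₁.2.2.1 1 one_pos)
  have hK₁ : IsTotallyCReflexive R C K₁ := .of_cDual hC ⟨hinj, hsurj⟩ <|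
    IsTotallyCReflexive.left (A := cDual C K₁) hdual (hP₁.dual hC) hT₁
  exact IsShortExact.extVanishing_right (A := K₁) (B := ModuleCat.of R P0) h.isShortExact
    hK₁.2.2.1 h.extVanishing_right hι

end GCDimensionTranspose

end Transpose

section Infimum

variable {S : Set ℕ}

theorem isLeast_of_sInf_natCast_image_eq {n : ℕ}
    (h : sInf ((fun k : ℕ ↦ (k : ℕ∞)) '' S) = n) : IsLeast S n := by
  have hle (k : ℕ) (hk : k ∈ S) : n ≤ k :=
    Nat.cast_le.1 (h.symm.le.trans (sInf_le (Set.mem_image_of_mem _ hk)))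
  have hne : ((fun k : ℕ ↦ (k : ℕ∞)) '' S).Nonempty :=
    Set.nonempty_iff_ne_empty.2 fun hS ↦ ENat.top_ne_natCast n (by rw [← h, hS, sInf_empty])
  obtain ⟨k, hk, hkn⟩ := csInf_mem hne
  exact ⟨Nat.cast_injective (hkn.trans h) ▸ hk, hle⟩

theorem sInf_natCast_image_add_image (S : Set ℕ) (p : ℕ) :
    sInf ((fun k : ℕ ↦ (k : ℕ∞)) '' ((· + p) '' S)) =
      sInf ((fun k : ℕ ↦ (k : ℕ∞)) '' S) + p := by
  simp only [sInf_image, iInf_image, Nat.cast_add, ENat.iInf₂_add]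

end Infimum

section Main

variable {C M N : ModuleCat.{u} R}

theorem gcdim_congr (e : M ≃ₗ[R] N) : gcdim R C M = gcdim R C N := by
  simp only [gcdim, gcdimLE_congr e]

theorem gcdimLE_of_gcdim_eq {n : ℕ} (h : gcdim R C M = n) : gcdimLE R C n M :=
  (isLeast_of_sInf_natCast_image_eq h).1

theorem ext_of_rgrade_eq {n : ℕ} (h : rgrade R C M = n) :
    0 < n ∧ ¬ Subsingleton (ExtM R M C n) ∧
      ∀ i, 0 < i → i < n → Subsingleton (ExtM R M C i) := by
  obtain ⟨⟨hn, hne⟩, hmin⟩ := isLeast_of_sInf_natCast_image_eq h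
  exact ⟨hn, hne, fun i hi hin ↦ not_not.1 fun hi' ↦ hin.not_ge (hmin ⟨hi, hi'⟩)⟩

theorem gcdim_ext_eq_gcdim_cokerDual_add [IsNoetherianRing R] (hC : IsSemidualizing R C)
    {P1 P0 : ModuleCat.{u} R} {d : P1 →ₗ[R] P0} {π : P0 →ₗ[R] M}
    (h : IsProjectivePresentation d π) {p : ℕ} (hM : gcdimLE R C (p + 1) M)
    (hExt : ∀ i, 0 < i → i ≤ p → Subsingleton (ExtM R M C i))
    (hne : ¬ Subsingleton (ExtM R M C (p + 1))) :
    gcdim R C (ExtM R M C (p + 1)) = gcdim R C (cokerDual C d) + p := by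
  have hiff := gcdimLE_cokerDual_iff hC p h hM hExt
  have hle (k : ℕ) (hk : gcdimLE R C k (ExtM R M C (p + 1))) : p ≤ k := by
    by_contra! hkp
    have hT : IsTotallyCReflexive R C (cokerDual C d) :=
      (hiff 0).2 (hk.mono (hkp.le.trans_eq p.zero_add.symm))
    have hExt₁ := hExt 1 one_pos (Nat.one_le_of_lt hkp)
    exact hne (extVanishing_of_isTotallyCReflexive_cokerDual hC h hExt₁ hT (p + 1) p.succ_pos)
  have himage : {k | gcdimLE R C k (ExtM R M C (p + 1))} =
      (· + p) '' {j | gcdimLE R C j (cokerDual C d)} := by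
    ext k
    refine ⟨fun hk ↦ ⟨k - p, ?_, Nat.sub_add_cancel (hle k hk)⟩, ?_⟩
    · exact (hiff (k - p)).2 (by rwa [Nat.sub_add_cancel (hle k hk)])
    · rintro ⟨j, hj, rfl⟩
      exact (hiff j).1 hj
  rw [gcdim, himage, sInf_natCast_image_add_image, gcdim]

theorem IsMinimalPresentation.isProjectivePresentation {P1 P0 : ModuleCat.{u} R}
    {d : P1 →ₗ[R] P0} {π : P0 →ₗ[R] M} (h : IsMinimalPresentation R d π) :
    IsProjectivePresentation d π := by
  obtain ⟨hfin₁, hfin₀, ⟨hP₀, hπ, -⟩, hrange, hP₁, -⟩ := h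
  exact ⟨hfin₁, hP₁, hfin₀, hP₀, LinearMap.exact_iff.2 hrange.symm, hπ⟩

end Main

theorem statement3_general [IsNoetherianRing R] {C : ModuleCat.{u} R} (hC : IsSemidualizing R C)
    {M : ModuleCat.{u} R} {n : ℕ} (hred : IsReducedGCPerfect R C M) (hdim : gcdim R C M = n)
    {P1 P0 : ModuleCat.{u} R} {d : P1 →ₗ[R] P0} {π : P0 →ₗ[R] M}
    (h : IsProjectivePresentation d π) :
    gcdim R C M + gcdim R C (cokerDual C d) = gcdim R C (ExtM R M C n) + 1 := by
  obtain ⟨hn, hne, hExt⟩ := ext_of_rgrade_eq (hred.2.trans hdim)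
  have hM : gcdimLE R C n M := gcdimLE_of_gcdim_eq hdim
  obtain ⟨p, rfl⟩ := Nat.exists_eq_succ_of_ne_zero hn.ne'
  have hE : gcdim R C (ExtM R M C (p + 1)) = gcdim R C (cokerDual C d) + p :=
    gcdim_ext_eq_gcdim_cokerDual_add hC h hM (fun i hi hip ↦ hExt i hi (Nat.lt_succ_of_le hip)) hne
  calc gcdim R C M + gcdim R C (cokerDual C d)
    _ = gcdim R C (cokerDual C d) + (p + 1 : ℕ) := by rw [hdim, add_comm]
    _ = gcdim R C (ExtM R M C (p + 1)) + 1 := by rw [hE, Nat.cast_add_one, add_assoc]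

end TransposeFormula

/-- if `M` is reduced `G_C`-perfect of `G_C`-dimension `n`, then
`G_C-dim(M) + G_C-dim(Tr_C(M)) = G_C-dim(Ext_R^n(M,C)) + 1` in `ℕ∞`. -/
theorem statement3 [IsNoetherianRing R] (hsp : IsSemiperfectRing R)
    (C : ModuleCat.{u} R) (hC : IsSemidualizing R C)
    (M : ModuleCat.{u} R) (hMfin : Module.Finite R ↥M)
    (n : ℕ) (hred : IsReducedGCPerfect R C M) (hdim : gcdim R C M = n) :
    ∀ T : ModuleCat.{u} R, IsTransposeC R C M T →
      gcdim R C M + gcdim R C T = gcdim R C (ExtM R M C n) + 1 := by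
  rintro T ⟨P1, P0, d, π, h, ⟨e⟩⟩
  rw [gcdim_congr (N := cokerDual C d) e]
  exact statement3_general hC hred hdim h.isProjectivePresentation

end
end
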